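/- Let n ≥ 2 and let β ≥ 0 and α be real numbers such that either (n−3)/2 < β < (n−1)/2 and α ≤ 2β − (n−3)/2, or β ≥ (n−1)/2 and α < β + 1. Then there exist γ > 0 (depending on β and α) and a constant C (depending on n, α, β and χ) such that for every Schwartz function q on ℝⁿ and every r ∈ (0,∞), ‖ χ(·) S_r(q)(·) ‖_{L²_α} ≤ C (1+r)^{−γ} ‖q‖²_{W^{β,2}_1}. -/

import Mathlib

open MeasureTheory Filter Set
open scoped ENNReal RealInnerProductSpace

noncomputable section

abbrev Euc (n : ℕ) := EuclideanSpace ℝ (Fin n)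

/-- The Japanese bracket `⟨x⟩ = (1+|x|²)^{1/2}`. -/
def jap {n : ℕ} (x : Euc n) : ℝ := Real.sqrt (1 + ‖x‖ ^ 2)

/-- The Ewald sphere measure `σ_{rη}`: the `(n-1)`-dimensional Hausdorff measure restricted
to `Γ_r(η) = {ξ : |ξ - η/2| = r|η|/2}`. -/
def ewaldM (n : ℕ) (r : ℝ) (η : Euc n) : Measure (Euc n) :=
  (MeasureTheory.Measure.hausdorffMeasure ((n : ℝ) - 1)).restrict
    (Metric.sphere ((2 : ℝ)⁻¹ • η) (r * ‖η‖ / 2))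

/-- The Fourier transform `f̂(ξ) = ∫ e^{-iξ·x} f(x) dx`. -/
def ft {n : ℕ} (f : Euc n → ℂ) (ξ : Euc n) : ℂ :=
  ∫ x : Euc n, Complex.exp (-Complex.I * ((⟪ξ, x⟫ : ℝ) : ℂ)) * f x

/-- `⟨D⟩^β f`: inverse Fourier transform of `⟨ξ⟩^β f̂(ξ)`. -/
def besselD {n : ℕ} (β : ℝ) (f : Euc n → ℂ) (x : Euc n) : ℂ :=
  (((2 * Real.pi) ^ n : ℝ)⁻¹ : ℝ) •
    ∫ ξ : Euc n, Complex.exp (Complex.I * ((⟪ξ, x⟫ : ℝ) : ℂ)) *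
      (((jap ξ ^ β : ℝ) : ℂ) * ft f ξ)

/-- The weighted Sobolev norm `‖f‖_{W^{β,2}_δ} = ‖⟨·⟩^δ ⟨D⟩^β f‖_{L²}`. -/
def wSobNorm {n : ℕ} (β δ : ℝ) (f : Euc n → ℂ) : ℝ≥0∞ :=
  eLpNorm (fun x : Euc n => (jap x ^ δ : ℝ) • besselD β f x) 2 volume

/-- The spherical operator
`S_r(q)(η) = (2/(|η|(1+r))) ∫_{Γ_r(η)} q̂(ξ) q̂(η-ξ) dσ_{rη}(ξ)`. -/
def Sr {n : ℕ} (r : ℝ) (q : Euc n → ℂ) (η : Euc n) : ℂ :=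
  ((2 / (‖η‖ * (1 + r))) : ℝ) • ∫ ξ, ft q ξ * ft q (η - ξ) ∂(ewaldM n r η)

/-- `K_r(g₁,g₂)(η) = (1/|η|) ∫_{Γ_r(η)} |g₁(ξ)||g₂(η-ξ)| dσ_{rη}(ξ)`. -/
def Kr {n : ℕ} (r : ℝ) (g₁ g₂ : Euc n → ℂ) (η : Euc n) : ℝ :=
  ‖η‖⁻¹ * ∫ ξ, ‖g₁ ξ‖ * ‖g₂ (η - ξ)‖ ∂(ewaldM n r η)

/-!
Writing `q̂ = ⟨·⟩^{-β} g`, the weighted norm of `q` is, by Plancherel, an `H¹` norm of `g`. For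
`ξ = (η + r|η|θ)/2` on the Ewald sphere, `η - ξ` is the reflected point, obtained from `-θ`. By this
symmetry one may assume `⟨η, θ⟩ ≥ 0`, and then `|ξ| ≥ |η|(1 + r)/4`, whereas `η - ξ` may be small:
`|η - ξ| ≥ (r|η|/4) |ξ/|ξ| - θ|`. Hence `|q̂(ξ)| ≤ (|η|(1 + r)/4)^{-β} |g(ξ)|`, and for `0 ≤ b ≤ β`
`|q̂(η - ξ)| ≤ (r|η|/4)^{-b} |ξ/|ξ| - θ|^{-b} |g(η - ξ)|`.
Cauchy-Schwarz in `θ` separates the factor `g(η - ξ)`, whose `L²` norm on any sphere is at most the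
`H¹` norm of `g` (integrate the derivative of `|g|²` along the outgoing rays), from
`|g(ξ)|² |ξ/|ξ| - θ|^{-2b}`. Integrating the latter in `η` for fixed `θ`, the
substitution `η ↦ ξ` has Jacobian bounded uniformly in `r`, and the remaining integral in `θ` is
finite exactly when `2b < n - 1`. Collecting powers of `|η|` and `1 + r` gives the decay rate
`γ = (3 + 2β + 2b - n)/2`, subject to `α ≤ γ`; take `b = β` in the first range of parameters and
`b` slightly below `(n - 1)/2` in the second.
-/

section Eilenberg

variable {X : Type*} [EMetricSpace X] [MeasurableSpace X] [BorelSpace X]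

theorem exists_cover_tsum_ediam_lt {d : ℝ} (hd : 0 < d) {A : Set X} {c : ℝ≥0∞}
    (hc : μH[d] A < c) {ε : ℝ≥0∞} (hε : 0 < ε) :
    ∃ U : ℕ → Set X, A ⊆ ⋃ i, U i ∧ (∀ i, Metric.ediam (U i) ≤ ε) ∧
      ∑' i, Metric.ediam (U i) ^ d < c := by
  rw [Measure.hausdorffMeasure_apply] at hc
  have hε' := (le_iSup₂ (f := fun (r : ℝ≥0∞) (_ : 0 < r) ↦ ⨅ (t : ℕ → Set X) (_ : A ⊆ ⋃ n, t n)
    (_ : ∀ n, Metric.ediam (t n) ≤ r), ∑' n, ⨆ _ : (t n).Nonempty, Metric.ediam (t n) ^ d)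
    ε hε).trans_lt hc
  simp only [iInf_lt_iff] at hε'
  obtain ⟨U, hAU, hU, hsum⟩ := hε'
  refine ⟨U, hAU, hU, lt_of_le_of_lt (ENNReal.tsum_le_tsum fun i ↦ ?_) hsum⟩
  rcases (U i).eq_empty_or_nonempty with h | h
  · simp [h, hd]
  · simp [h]

-- Eilenberg's inequality: a cover of `A` by sets `U i` slices to covers of the fibres, and `U i`
-- meets a fibre only for `t ∈ f '' U i`, a set of measure at most `diam (U i)`.
theorem lintegral_hausdorffMeasure_inter_fiber_le {f : X → ℝ} (hf : LipschitzWith 1 f) {d : ℝ}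
    (hd : 0 < d) (A : Set X) :
    ∫⁻ t, μH[d] (A ∩ f ⁻¹' {t}) ≤ μH[d + 1] A := by
  refine le_of_forall_gt_imp_ge_of_dense fun c hc ↦ ?_
  choose U hAU hU hsum using fun k : ℕ ↦ exists_cover_tsum_ediam_lt (by positivity) hc
    (ENNReal.inv_pos.2 (ENNReal.natCast_ne_top k))
  let J : ℕ → ℕ → Set ℝ := fun k i ↦ toMeasurable volume (f '' U k i)
  let F : ℕ → ℝ → ℝ≥0∞ := fun k t ↦ ∑' i, (J k i).indicator (fun _ ↦ Metric.ediam (U k i) ^ d) t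
  have hF : ∀ k, Measurable (F k) := fun k ↦ Measurable.tsum fun i ↦
    measurable_const.indicator (measurableSet_toMeasurable _ _)
  have slice_le : ∀ t, μH[d] (A ∩ f ⁻¹' {t}) ≤ liminf (fun k ↦ F k t) atTop := by
    intro t
    refine (Measure.hausdorffMeasure_le_liminf_tsum d _ (fun k : ℕ ↦ (k : ℝ≥0∞)⁻¹)
      ENNReal.tendsto_inv_nat_nhds_zero (fun k i ↦ U k i ∩ f ⁻¹' {t})
      (Eventually.of_forall fun k i ↦ (Metric.ediam_mono inter_subset_left).trans (hU k i))
      (Eventually.of_forall fun k ↦ ?_)).trans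
      (liminf_le_liminf (Eventually.of_forall fun k ↦ ENNReal.tsum_le_tsum fun i ↦ ?_))
    · rw [← iUnion_inter]
      exact inter_subset_inter_left _ (hAU k)
    · rcases (U k i ∩ f ⁻¹' {t}).eq_empty_or_nonempty with h | ⟨x, hxU, rfl⟩
      · simp [h, hd]
      · rw [indicator_of_mem (subset_toMeasurable _ _ (mem_image_of_mem f hxU))]
        gcongr
        exact inter_subset_left
  have lintegral_F_le : ∀ k, ∫⁻ t, F k t ≤ c := by
    intro k
    calc ∫⁻ t, F k t = ∑' i, Metric.ediam (U k i) ^ d * volume (J k i) := by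
          rw [lintegral_tsum fun i ↦
            (measurable_const.indicator (measurableSet_toMeasurable _ _)).aemeasurable]
          exact tsum_congr fun i ↦ lintegral_indicator_const (measurableSet_toMeasurable _ _) _
      _ ≤ ∑' i, Metric.ediam (U k i) ^ (d + 1) := by
          refine ENNReal.tsum_le_tsum fun i ↦ ?_
          rw [ENNReal.rpow_add_of_nonneg _ _ hd.le zero_le_one, ENNReal.rpow_one,
            measure_toMeasurable]
          gcongr
          simpa using (Real.volume_le_diam _).trans (hf.ediam_image_le (U k i))
      _ ≤ c := (hsum k).le
  calc ∫⁻ t, μH[d] (A ∩ f ⁻¹' {t}) ≤ ∫⁻ t, liminf (fun k ↦ F k t) atTop := lintegral_mono slice_le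
    _ ≤ liminf (fun k ↦ ∫⁻ t, F k t) atTop := lintegral_liminf_le hF
    _ ≤ c := liminf_le_of_le (by isBoundedDefault) fun b hb ↦
        let ⟨k, hk⟩ := hb.exists; hk.trans (lintegral_F_le k)

end Eilenberg

section SphereMeasure

open Metric Module
open scoped NNReal Pointwise

variable {E : Type*} [NormedAddCommGroup E] [NormedSpace ℝ E]

theorem range_add_smul_sphere (y : E) {R : ℝ} (hR : 0 < R) :
    range (fun θ : sphere (0 : E) 1 ↦ y + R • (θ : E)) = sphere y R := by
  ext x
  rw [mem_sphere_iff_norm]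
  constructor
  · rintro ⟨θ, rfl⟩
    simp [norm_smul, hR.le]
  · intro hx
    refine ⟨⟨R⁻¹ • (x - y), ?_⟩, ?_⟩
    · rw [mem_sphere_zero_iff_norm, norm_smul, hx, norm_inv, Real.norm_of_nonneg hR.le,
        inv_mul_cancel₀ hR.ne']
    · simp [smul_smul, hR.ne']

variable [MeasurableSpace E] [BorelSpace E]

theorem hausdorffMeasure_smul_of_pos {d : ℝ} (hd : 0 ≤ d) {c : ℝ} (hc : 0 < c) (s : Set E) :
    μH[d] (c • s) = ENNReal.ofReal (c ^ d) * μH[d] s := by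
  rw [Measure.hausdorffMeasure_smul₀ hd hc.ne', ENNReal.smul_def, smul_eq_mul,
    ENNReal.coe_rpow_of_nonneg _ hd, ← ENNReal.ofReal_rpow_of_pos hc, ← enorm_eq_nnnorm,
    Real.enorm_of_nonneg hc.le]

theorem hausdorffMeasure_le_hausdorffMeasure_cone {d : ℝ} (hd : 0 < d)
    (s : Set (sphere (0 : E) 1)) :
    μH[d] s ≤ ENNReal.ofReal (d + 1) * μH[d + 1] (Ioo (0 : ℝ) 1 • ((↑) '' s : Set E)) := by
  set A : Set E := (↑) '' s with hA
  have slice_ge : ∀ t ∈ Ioo (0 : ℝ) 1, ENNReal.ofReal (t ^ d) * μH[d] s ≤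
      μH[d] (Ioo (0 : ℝ) 1 • A ∩ norm ⁻¹' {t}) := by
    intro t ht
    have smul_subset : t • A ⊆ Ioo (0 : ℝ) 1 • A ∩ norm ⁻¹' {t} := by
      rintro _ ⟨_, ⟨θ, hθ, rfl⟩, rfl⟩
      exact ⟨smul_mem_smul ht (mem_image_of_mem _ hθ), by simp [norm_smul, abs_of_pos ht.1]⟩
    refine le_trans (le_of_eq ?_) (measure_mono smul_subset)
    rw [hausdorffMeasure_smul_of_pos hd.le ht.1, hA,
      isometry_subtype_coe.hausdorffMeasure_image (.inl hd.le)]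
  have lintegral_rpow : ∫⁻ t in Ioo (0 : ℝ) 1, ENNReal.ofReal (t ^ d) =
      ENNReal.ofReal (d + 1)⁻¹ := by
    rw [restrict_Ioo_eq_restrict_Ioc, ← ofReal_integral_eq_lintegral_ofReal,
      ← intervalIntegral.integral_of_le zero_le_one, integral_rpow (.inl (by linarith))]
    · simp [Real.zero_rpow (by linarith : d + 1 ≠ 0)]
    · exact (intervalIntegrable_iff_integrableOn_Ioc_of_le zero_le_one).1
        (intervalIntegral.intervalIntegrable_rpow' (by linarith))
    · filter_upwards [ae_restrict_mem measurableSet_Ioc] with t ht using Real.rpow_nonneg ht.1.le _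
  have scaled : ENNReal.ofReal (d + 1)⁻¹ * μH[d] s ≤ μH[d + 1] (Ioo (0 : ℝ) 1 • A) :=
    calc ENNReal.ofReal (d + 1)⁻¹ * μH[d] s
        = ∫⁻ t in Ioo (0 : ℝ) 1, ENNReal.ofReal (t ^ d) * μH[d] s := by
          rw [lintegral_mul_const _ (by fun_prop), lintegral_rpow]
      _ ≤ ∫⁻ t in Ioo (0 : ℝ) 1, μH[d] (Ioo (0 : ℝ) 1 • A ∩ norm ⁻¹' {t}) :=
          setLIntegral_mono' measurableSet_Ioo slice_ge
      _ ≤ ∫⁻ t, μH[d] (Ioo (0 : ℝ) 1 • A ∩ norm ⁻¹' {t}) := setLIntegral_le_lintegral _ _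
      _ ≤ μH[d + 1] (Ioo (0 : ℝ) 1 • A) :=
          lintegral_hausdorffMeasure_inter_fiber_le lipschitzWith_one_norm hd _
  rwa [ENNReal.ofReal_inv_of_pos (by linarith),
    ENNReal.inv_mul_le_iff (by simpa using by linarith) ENNReal.ofReal_ne_top] at scaled

theorem lintegral_sphere_hausdorffMeasure (y : E) {R : ℝ} (hR : 0 < R) {d : ℝ} (hd : 0 ≤ d)
    {F : E → ℝ≥0∞} (hF : Measurable F) :
    ∫⁻ x in sphere y R, F x ∂μH[d] =
      ENNReal.ofReal (R ^ d) * ∫⁻ θ : sphere (0 : E) 1, F (y + R • θ) ∂μH[d] := by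
  have hmeas : Measurable fun θ : sphere (0 : E) 1 ↦ y + R • (θ : E) := by fun_prop
  have restrict_eq : (μH[d] : Measure E).restrict (sphere y R) =
      ENNReal.ofReal (R ^ d) • Measure.map (fun θ : sphere (0 : E) 1 ↦ y + R • (θ : E)) μH[d] := by
    ext s hs
    set A := (fun θ : sphere (0 : E) 1 ↦ y + R • (θ : E)) ⁻¹' s with hA
    have image_eq : s ∩ sphere y R = IsometryEquiv.addLeft y '' (R • ((↑) '' A : Set E)) := by
      rw [← range_add_smul_sphere y hR, ← image_preimage_eq_inter_range, ← hA, ← image_smul,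
        image_image, image_image]
      rfl
    rw [Measure.restrict_apply hs, Measure.smul_apply, Measure.map_apply hmeas hs, image_eq,
      IsometryEquiv.hausdorffMeasure_image, hausdorffMeasure_smul_of_pos hd hR,
      isometry_subtype_coe.hausdorffMeasure_image (.inl hd), smul_eq_mul]
  rw [restrict_eq, lintegral_smul_measure, lintegral_map hF hmeas, smul_eq_mul]

variable [FiniteDimensional ℝ E] (μ : Measure E) [μ.IsAddHaarMeasure]

theorem exists_hausdorffMeasure_sphere_le_smul_toSphere (hE : 2 ≤ finrank ℝ E) :
    ∃ c : ℝ≥0, (μH[finrank ℝ E - 1] : Measure (sphere (0 : E) 1)) ≤ c • μ.toSphere := by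
  refine ⟨(μH[finrank ℝ E] : Measure E).addHaarScalarFactor μ, Measure.le_iff.2 fun s hs ↦ ?_⟩
  have hd : (0 : ℝ) < finrank ℝ E - 1 := by
    rw [sub_pos]; exact_mod_cast hE
  calc μH[finrank ℝ E - 1] s
      ≤ finrank ℝ E * μH[finrank ℝ E] (Ioo (0 : ℝ) 1 • ((↑) '' s : Set E)) := by
        simpa using hausdorffMeasure_le_hausdorffMeasure_cone hd s
    _ = (μH[finrank ℝ E] : Measure E).addHaarScalarFactor μ • μ.toSphere s := by
        conv_lhs => rw [Measure.isAddLeftInvariant_eq_smul μH[finrank ℝ E] μ]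
        rw [Measure.smul_apply, μ.toSphere_apply' hs, mul_smul_comm]

end SphereMeasure

section Polar

open Metric Module

theorem smul_mem_ball_of_mem_sphere {E : Type*} [NormedAddCommGroup E] [NormedSpace ℝ E]
    {ω θ : sphere (0 : E) 1} {ε t : ℝ} (hθ : θ ∈ ball ω ε) (ht : t ∈ Ioo 1 (1 + ε)) :
    t • (θ : E) ∈ ball (ω : E) (2 * ε) := by
  rw [mem_ball] at hθ ⊢
  calc dist (t • (θ : E)) ω ≤ dist (t • (θ : E)) θ + dist (θ : E) ω := dist_triangle _ _ _
    _ = (t - 1) + dist θ ω := by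
        rw [dist_eq_norm, show t • (θ : E) - θ = (t - 1) • (θ : E) by rw [sub_smul, one_smul],
          norm_smul, Real.norm_of_nonneg (by linarith [ht.1]), norm_eq_of_mem_sphere, mul_one,
          Subtype.dist_eq]
    _ < 2 * ε := by linarith [ht.2]

variable {E : Type*} [NormedAddCommGroup E] [NormedSpace ℝ E] [FiniteDimensional ℝ E]
  [MeasurableSpace E] [BorelSpace E] (μ : Measure E) [μ.IsAddHaarMeasure]

theorem lintegral_eq_lintegral_toSphere [Nontrivial E] {f : E → ℝ≥0∞} (hf : Measurable f) :
    ∫⁻ x, f x ∂μ = ∫⁻ θ, (∫⁻ t in Ioi (0 : ℝ),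
      ENNReal.ofReal (t ^ (finrank ℝ E - 1)) * f (t • (θ : E))) ∂μ.toSphere := by
  have hF : Measurable fun p : sphere (0 : E) 1 × Ioi (0 : ℝ) ↦ f (p.2.1 • p.1.1) :=
    hf.comp (by fun_prop)
  calc ∫⁻ x, f x ∂μ = ∫⁻ x : ({0}ᶜ : Set E), f x ∂μ.comap (↑) := by
        rw [lintegral_subtype_comap (measurableSet_singleton _).compl f, restrict_compl_singleton]
    _ = ∫⁻ x : ({0}ᶜ : Set E), f ((homeomorphUnitSphereProd E x).2.1 •
          (homeomorphUnitSphereProd E x).1.1) ∂μ.comap (↑) := by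
        refine lintegral_congr fun x ↦ ?_
        simp [smul_smul, norm_ne_zero_iff.2 x.2]
    _ = ∫⁻ θ, ∫⁻ t, f (t.1 • θ.1) ∂Measure.volumeIoiPow (finrank ℝ E - 1) ∂μ.toSphere := by
        rw [μ.measurePreserving_homeomorphUnitSphereProd.lintegral_comp hF,
          lintegral_prod _ hF.aemeasurable]
    _ = _ := by
        refine lintegral_congr fun θ ↦ ?_
        rw [Measure.volumeIoiPow, lintegral_withDensity_eq_lintegral_mul _ (by fun_prop)
          (show Measurable fun t : Ioi (0 : ℝ) ↦ f (t.1 • θ.1) from hf.comp (by fun_prop))]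
        exact lintegral_subtype_comap measurableSet_Ioi
          fun t : ℝ ↦ ENNReal.ofReal (t ^ (finrank ℝ E - 1)) * f (t • θ.1)

theorem toSphere_ball_le (ω : sphere (0 : E) 1) {ε : ℝ} (hε : 0 < ε) :
    μ.toSphere (ball ω ε) ≤
      2 ^ finrank ℝ E * μ (ball 0 1) * ENNReal.ofReal (ε ^ (finrank ℝ E - 1)) := by
  have : Nontrivial E := ⟨⟨ω, 0, ne_of_apply_ne norm (by simp)⟩⟩
  have cap_le : μ.toSphere (ball ω ε) * ENNReal.ofReal ε ≤ μ (ball ω (2 * ε)) :=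
    calc μ.toSphere (ball ω ε) * ENNReal.ofReal ε
        = ∫⁻ θ in ball ω ε, (∫⁻ t in Ioo (1 : ℝ) (1 + ε), 1) ∂μ.toSphere := by
          simp [mul_comm]
      _ ≤ ∫⁻ θ in ball ω ε, (∫⁻ t in Ioo (1 : ℝ) (1 + ε), ENNReal.ofReal (t ^ (finrank ℝ E - 1)) *
            (ball (ω : E) (2 * ε)).indicator 1 (t • (θ : E))) ∂μ.toSphere := by
          refine setLIntegral_mono' measurableSet_ball fun θ hθ ↦
            setLIntegral_mono' measurableSet_Ioo fun t ht ↦ ?_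
          rw [indicator_of_mem (smul_mem_ball_of_mem_sphere hθ ht), Pi.one_apply, mul_one,
            ENNReal.one_le_ofReal]
          exact one_le_pow₀ ht.1.le
      _ ≤ ∫⁻ θ, (∫⁻ t in Ioi (0 : ℝ), ENNReal.ofReal (t ^ (finrank ℝ E - 1)) *
            (ball (ω : E) (2 * ε)).indicator 1 (t • (θ : E))) ∂μ.toSphere :=
          (setLIntegral_le_lintegral _ _).trans (lintegral_mono fun θ ↦
            lintegral_mono_set fun t ht ↦ mem_Ioi.2 (zero_lt_one.trans ht.1))
      _ = μ (ball ω (2 * ε)) := by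
          rw [← lintegral_eq_lintegral_toSphere μ (measurable_one.indicator measurableSet_ball),
            lintegral_indicator_one measurableSet_ball]
  have volume_eq : μ (ball ω (2 * ε)) = 2 ^ finrank ℝ E * μ (ball 0 1) *
      ENNReal.ofReal (ε ^ (finrank ℝ E - 1)) * ENNReal.ofReal ε := by
    have hpow : ε ^ finrank ℝ E = ε ^ (finrank ℝ E - 1) * ε :=
      (pow_sub_one_mul finrank_pos.ne' ε).symm
    rw [Measure.addHaar_ball μ _ (by positivity), mul_pow, hpow, ENNReal.ofReal_mul (by positivity),
      ENNReal.ofReal_mul (by positivity), ENNReal.ofReal_pow zero_le_two, ENNReal.ofReal_ofNat]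
    ring
  rw [volume_eq] at cap_le
  exact (ENNReal.mul_le_mul_iff_left (by simpa using hε) ENNReal.ofReal_ne_top).1 cap_le

end Polar

section SingularIntegral

open scoped Topology

theorem lintegral_Ioi_one_rpow_neg {p : ℝ} (hp : 1 < p) :
    ∫⁻ t in Ioi (1 : ℝ), ENNReal.ofReal (t ^ (-p)) = ENNReal.ofReal (p - 1)⁻¹ := by
  have hp' : -p < -1 := neg_lt_neg hp
  rw [← ofReal_integral_eq_lintegral_ofReal (integrableOn_Ioi_rpow_of_lt hp' zero_lt_one),
    integral_Ioi_rpow_of_lt hp' zero_lt_one, Real.one_rpow, neg_add_eq_sub, ← neg_sub p 1,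
    neg_div_neg_eq, one_div]
  filter_upwards [ae_restrict_mem measurableSet_Ioi] with t ht
  exact Real.rpow_nonneg (zero_le_one.trans (le_of_lt ht)) _

variable {X : Type*} [MetricSpace X] [MeasurableSpace X] {ν : Measure X} {x₀ : X} {C : ℝ≥0∞}
  {d s : ℝ}

theorem measure_singleton_eq_zero_of_measure_ball_le (hC : C ≠ ⊤) (hd : 0 < d)
    (hν : ∀ ε : ℝ, 0 < ε → ν (Metric.ball x₀ ε) ≤ C * ENNReal.ofReal (ε ^ d)) : ν {x₀} = 0 := by
  have htend : Tendsto (fun ε : ℝ ↦ C * ENNReal.ofReal (ε ^ d)) (𝓝[>] 0) (𝓝 0) := by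
    have : Tendsto (fun ε : ℝ ↦ ENNReal.ofReal (ε ^ d)) (𝓝[>] 0) (𝓝 (ENNReal.ofReal (0 ^ d))) :=
      ((ENNReal.continuous_ofReal.comp (Real.continuous_rpow_const hd.le)).tendsto 0).mono_left
        nhdsWithin_le_nhds
    simpa [Real.zero_rpow hd.ne'] using ENNReal.Tendsto.const_mul this (.inr hC)
  refine le_antisymm (ge_of_tendsto htend ?_) zero_le
  filter_upwards [self_mem_nhdsWithin] with ε hε
  exact (measure_mono (singleton_subset_iff.2 (Metric.mem_ball_self hε))).trans (hν ε hε)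

theorem lintegral_edist_rpow_neg_le [OpensMeasurableSpace X] (hC : C ≠ ⊤)
    (hν : ∀ ε : ℝ, 0 < ε → ν (Metric.ball x₀ ε) ≤ C * ENNReal.ofReal (ε ^ d))
    (hs : 0 ≤ s) (hsd : s < d) :
    ∫⁻ x, edist x x₀ ^ (-s) ∂ν ≤ ν univ + C * ENNReal.ofReal (s / (d - s)) := by
  rcases hs.eq_or_lt with rfl | hs
  · simp
  have superlevel_subset : ∀ t : ℝ, 0 < t →
      {x | t < dist x x₀ ^ (-s)} ⊆ Metric.ball x₀ (t ^ (-s⁻¹)) := by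
    intro t ht x hx
    rw [Metric.mem_ball]
    have hlt := Real.rpow_lt_rpow_of_neg ht hx (neg_lt_zero.2 (inv_pos.2 hs))
    rwa [← Real.rpow_mul dist_nonneg, neg_mul_neg, mul_inv_cancel₀ hs.ne', Real.rpow_one] at hlt
  calc ∫⁻ x, edist x x₀ ^ (-s) ∂ν = ∫⁻ x, ENNReal.ofReal (dist x x₀ ^ (-s)) ∂ν := by
        refine lintegral_congr_ae ?_
        have singleton_null := measure_singleton_eq_zero_of_measure_ball_le hC (hs.trans hsd) hν
        filter_upwards [compl_mem_ae_iff.2 singleton_null] with x hx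
        rw [edist_dist, ENNReal.ofReal_rpow_of_pos (dist_pos.2 hx)]
    _ = ∫⁻ t in Ioi (0 : ℝ), ν {x | t < dist x x₀ ^ (-s)} :=
        lintegral_eq_lintegral_meas_lt _ (Eventually.of_forall fun x ↦ by positivity)
          (by fun_prop)
    _ ≤ (∫⁻ t in Ioc (0 : ℝ) 1, ν univ) +
          ∫⁻ t in Ioi (1 : ℝ), C * ENNReal.ofReal (t ^ (-(d / s))) := by
        rw [← Ioc_union_Ioi_eq_Ioi zero_le_one]
        refine (lintegral_union_le _ _ _).trans (add_le_add ?_ ?_)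
        · exact lintegral_mono fun _ ↦ measure_mono (subset_univ _)
        · refine setLIntegral_mono' measurableSet_Ioi fun t ht ↦ ?_
          have ht0 : 0 < t := zero_lt_one.trans ht
          refine ((measure_mono (superlevel_subset t ht0)).trans (hν _ (by positivity))).trans_eq ?_
          rw [← Real.rpow_mul ht0.le, neg_mul, inv_mul_eq_div]
    _ = ν univ + C * ENNReal.ofReal (s / (d - s)) := by
        rw [lintegral_const_mul' _ _ hC, lintegral_Ioi_one_rpow_neg ((one_lt_div hs).2 hsd),
          div_sub_one hs.ne', inv_div]
        simp

end SingularIntegral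

section Trace

open Module
open scoped Topology

theorem enorm_le_lintegral_Ioi_enorm_deriv {F : Type*} [NormedAddCommGroup F] [NormedSpace ℝ F]
    {u : ℝ → F} (hu : ContDiff ℝ 1 u) (hlim : Tendsto u atTop (𝓝 0)) (R : ℝ) :
    ‖u R‖ₑ ≤ ∫⁻ t in Ioi R, ‖deriv u t‖ₑ := by
  have hdiff : Tendsto (fun T ↦ ‖u T - u R‖ₑ) atTop (𝓝 ‖u R‖ₑ) := by
    simpa using (hlim.sub_const (u R)).enorm
  refine le_of_tendsto hdiff ((eventually_ge_atTop R).mono fun T hRT ↦ ?_)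
  calc ‖u T - u R‖ₑ ≤ ∫⁻ t in Icc R T, ‖deriv u t‖ₑ :=
        enorm_sub_le_lintegral_deriv_of_contDiffOn_Icc hu.contDiffOn hRT
    _ ≤ ∫⁻ t in Ioi R, ‖deriv u t‖ₑ := by
        rw [← restrict_Ioc_eq_restrict_Icc]
        exact lintegral_mono_set Ioc_subset_Ioi_self

variable {F : Type*} [NormedAddCommGroup F] [InnerProductSpace ℝ F]

theorem enorm_sq_le_lintegral_Ioi {φ : ℝ → F} (hφ : ContDiff ℝ 1 φ)
    (hlim : Tendsto φ atTop (𝓝 0)) (R : ℝ) :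
    ‖φ R‖ₑ ^ 2 ≤ ∫⁻ t in Ioi R, (‖φ t‖ₑ ^ 2 + ‖deriv φ t‖ₑ ^ 2) := by
  have deriv_le : ∀ t, ‖deriv (fun t ↦ ‖φ t‖ ^ 2) t‖ₑ ≤ ‖φ t‖ₑ ^ 2 + ‖deriv φ t‖ₑ ^ 2 := by
    intro t
    rw [((hφ.differentiable one_ne_zero).differentiableAt (x := t)).hasDerivAt.norm_sq.deriv]
    have hreal : ‖2 * ⟪φ t, deriv φ t⟫‖ ≤ ‖φ t‖ ^ 2 + ‖deriv φ t‖ ^ 2 := by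
      rw [norm_mul, Real.norm_ofNat, Real.norm_eq_abs]
      linarith [abs_real_inner_le_norm (φ t) (deriv φ t), two_mul_le_add_sq ‖φ t‖ ‖deriv φ t‖]
    simpa only [ENNReal.ofReal_add (sq_nonneg ‖φ t‖) (sq_nonneg ‖deriv φ t‖),
      ENNReal.ofReal_pow (norm_nonneg _), ofReal_norm] using ENNReal.ofReal_le_ofReal hreal
  have hsq := enorm_le_lintegral_Ioi_enorm_deriv (hφ.norm_sq ℝ) (by simpa using hlim.norm.pow 2) R
  rw [enorm_pow, enorm_norm] at hsq
  exact hsq.trans (lintegral_mono deriv_le)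

variable {E : Type*} [NormedAddCommGroup E] [NormedSpace ℝ E]

/-- The square of the `H¹` norm of `g`, as an extended nonnegative real. -/
def sobolevEnergy {F : Type*} [NormedAddCommGroup F] [NormedSpace ℝ F] [MeasurableSpace E]
    (μ : Measure E) (g : E → F) : ℝ≥0∞ :=
  ∫⁻ x, (‖g x‖ₑ ^ 2 + ‖fderiv ℝ g x‖ₑ ^ 2) ∂μ

theorem tendsto_add_smul_atTop_cobounded (y : E) {θ : E} (hθ : θ ≠ 0) :
    Tendsto (fun t : ℝ ↦ y + t • θ) atTop (Bornology.cobounded E) := by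
  rw [← tendsto_norm_atTop_iff_cobounded]
  refine tendsto_atTop_mono (f := fun t : ℝ ↦ t * ‖θ‖ - ‖y‖) (fun t ↦ ?_)
    (tendsto_atTop_add_const_right _ _ (tendsto_id.atTop_mul_const (norm_pos_iff.2 hθ)))
  have := norm_sub_le (y + t • θ) y
  rw [add_sub_cancel_left, norm_smul, Real.norm_eq_abs] at this
  linarith [mul_le_mul_of_nonneg_right (le_abs_self t) (norm_nonneg θ)]

theorem enorm_sq_le_lintegral_ray {g : E → F} (hg : ContDiff ℝ 1 g)
    (hlim : Tendsto g (Bornology.cobounded E) (𝓝 0)) (y : E) {θ : E} (hθ : ‖θ‖ = 1) (R : ℝ) :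
    ‖g (y + R • θ)‖ₑ ^ 2 ≤
      ∫⁻ t in Ioi R, (‖g (y + t • θ)‖ₑ ^ 2 + ‖fderiv ℝ g (y + t • θ)‖ₑ ^ 2) := by
  have hθ0 : θ ≠ 0 := norm_ne_zero_iff.1 (hθ ▸ one_ne_zero)
  have deriv_ray : ∀ t, deriv (fun t : ℝ ↦ g (y + t • θ)) t = fderiv ℝ g (y + t • θ) θ := by
    intro t
    have hline : HasDerivAt (fun t : ℝ ↦ y + t • θ) θ t := by
      simpa using ((hasDerivAt_id t).smul_const θ).const_add y
    have hfderiv := (hg.differentiable one_ne_zero (y + t • θ)).hasFDerivAt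
    exact (hfderiv.comp_hasDerivAt t hline).deriv
  refine (enorm_sq_le_lintegral_Ioi (hg.comp (by fun_prop : ContDiff ℝ 1 fun t : ℝ ↦ y + t • θ))
    (hlim.comp (tendsto_add_smul_atTop_cobounded y hθ0)) R).trans (lintegral_mono fun t ↦ ?_)
  have hle := (fderiv ℝ g (y + t • θ)).le_opENorm θ
  rw [← ofReal_norm θ, hθ, ENNReal.ofReal_one, mul_one, ← deriv_ray] at hle
  simp only [Function.comp_def]
  gcongr

variable [FiniteDimensional ℝ E] [MeasurableSpace E] [BorelSpace E] (μ : Measure E)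
  [μ.IsAddHaarMeasure]

theorem lintegral_toSphere_enorm_sq_le_sobolevEnergy [Nontrivial E] {g : E → F}
    (hg : ContDiff ℝ 1 g) (hlim : Tendsto g (Bornology.cobounded E) (𝓝 0)) (y : E) {R : ℝ}
    (hR : 0 ≤ R) :
    ENNReal.ofReal (R ^ (finrank ℝ E - 1)) * ∫⁻ θ, ‖g (y + R • (θ : E))‖ₑ ^ 2 ∂μ.toSphere ≤
      sobolevEnergy μ g := by
  set e : E → ℝ≥0∞ := fun x ↦ ‖g x‖ₑ ^ 2 + ‖fderiv ℝ g x‖ₑ ^ 2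
  have hmeas : Measurable fun x ↦ e (y + x) := by
    have := hg.continuous
    have := hg.continuous_fderiv one_ne_zero
    exact Continuous.measurable (by fun_prop)
  rw [sobolevEnergy, ← lintegral_add_left_eq_self _ y, lintegral_eq_lintegral_toSphere μ hmeas,
    ← lintegral_const_mul' _ _ ENNReal.ofReal_ne_top]
  refine lintegral_mono fun θ ↦ ?_
  calc ENNReal.ofReal (R ^ (finrank ℝ E - 1)) * ‖g (y + R • (θ : E))‖ₑ ^ 2
      ≤ ENNReal.ofReal (R ^ (finrank ℝ E - 1)) * ∫⁻ t in Ioi R, e (y + t • (θ : E)) := by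
        gcongr
        exact enorm_sq_le_lintegral_ray hg hlim y (norm_eq_of_mem_sphere θ) R
    _ ≤ ∫⁻ t in Ioi R, ENNReal.ofReal (t ^ (finrank ℝ E - 1)) * e (y + t • (θ : E)) := by
        rw [← lintegral_const_mul' _ _ ENNReal.ofReal_ne_top]
        refine setLIntegral_mono' measurableSet_Ioi fun t ht ↦ ?_
        have := le_of_lt (mem_Ioi.1 ht)
        gcongr
    _ ≤ ∫⁻ t in Ioi (0 : ℝ), ENNReal.ofReal (t ^ (finrank ℝ E - 1)) * e (y + t • (θ : E)) :=
        lintegral_mono_set (Ioi_subset_Ioi hR)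

end Trace

section Ewald

open Module

variable {E : Type*} [NormedAddCommGroup E] [InnerProductSpace ℝ E]

/-- The point of the Ewald sphere `Γ_r(η)` in the direction `θ` from its centre `η/2`. As `θ` runs
over the unit sphere this parametrises `Γ_r(η)`, and `ξ ↦ η - ξ` becomes `θ ↦ -θ`. -/
def ewaldPoint (r : ℝ) (η θ : E) : E := (2 : ℝ)⁻¹ • (η + (r * ‖η‖) • θ)

theorem sub_ewaldPoint (r : ℝ) (η θ : E) : η - ewaldPoint r η θ = ewaldPoint r η (-θ) := by
  unfold ewaldPoint
  module

theorem ewaldPoint_eq_add_smul (r : ℝ) (η θ : E) :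
    ewaldPoint r η θ = (2 : ℝ)⁻¹ • η + (r * ‖η‖ / 2) • θ := by
  unfold ewaldPoint
  module

theorem continuous_ewaldPoint (r : ℝ) : Continuous fun p : E × E ↦ ewaldPoint r p.1 p.2 := by
  unfold ewaldPoint
  fun_prop

theorem norm_le_norm_add_of_inner_nonneg {x y : E} (h : 0 ≤ ⟪x, y⟫) : ‖x‖ ≤ ‖x + y‖ := by
  refine le_of_sq_le_sq ?_ (norm_nonneg _)
  rw [norm_add_sq_real]
  nlinarith [sq_nonneg ‖y‖]

theorem injOn_ewaldPoint {r : ℝ} (hr : 0 ≤ r) (θ : E) :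
    InjOn (fun η ↦ ewaldPoint r η θ) {η | 0 ≤ ⟪η, θ⟫} := by
  have norm_le : ∀ η η' : E, 0 ≤ ⟪η, θ⟫ → η + (r * ‖η‖) • θ = η' + (r * ‖η'‖) • θ →
      ‖η‖ ≤ ‖η'‖ := by
    intro η η' hη heq
    by_contra! hlt
    have hη' : η' = η + (r * (‖η‖ - ‖η'‖)) • θ := by
      rw [mul_sub, sub_smul, add_sub, heq, add_sub_cancel_right]
    refine hlt.not_ge (hη' ▸ norm_le_norm_add_of_inner_nonneg ?_)
    rw [inner_smul_right]
    exact mul_nonneg (mul_nonneg hr (sub_nonneg.2 hlt.le)) hη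
  intro η hη η' hη' h
  have heq : η + (r * ‖η‖) • θ = η' + (r * ‖η'‖) • θ :=
    smul_right_injective _ (by norm_num : (2 : ℝ)⁻¹ ≠ 0) h
  rw [le_antisymm (norm_le η η' hη heq) (norm_le η' η hη' heq.symm)] at heq
  exact add_left_injective _ heq

theorem hasFDerivAt_norm {x : E} (hx : x ≠ 0) :
    HasFDerivAt (fun y : E ↦ ‖y‖) (‖x‖⁻¹ • innerSL ℝ x) x := by
  have hsq := (hasStrictFDerivAt_norm_sq x).hasFDerivAt.sqrt (by positivity)
  simp only [Real.sqrt_sq (norm_nonneg _)] at hsq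
  convert hsq using 1
  rw [← Nat.cast_smul_eq_nsmul ℝ 2, smul_smul]
  congr 1
  field_simp
  norm_num

theorem hasFDerivAt_ewaldPoint (r : ℝ) (θ : E) {η : E} (hη : η ≠ 0) :
    HasFDerivAt (fun η ↦ ewaldPoint r η θ) ((2 : ℝ)⁻¹ •
      (ContinuousLinearMap.id ℝ E + ((r * ‖η‖⁻¹) • innerSL ℝ η).smulRight θ)) η := by
  convert! ((hasFDerivAt_id η).add
    (((hasFDerivAt_norm hη).const_mul r).smul_const θ)).const_smul (2 : ℝ)⁻¹ using 1
  rw [smul_smul]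

theorem det_fderiv_ewaldPoint [FiniteDimensional ℝ E] (r : ℝ) (θ η : E) :
    ((2 : ℝ)⁻¹ •
      (ContinuousLinearMap.id ℝ E + ((r * ‖η‖⁻¹) • innerSL ℝ η).smulRight θ)).det =
      (2 : ℝ)⁻¹ ^ finrank ℝ E * (1 + r * ‖η‖⁻¹ * ⟪η, θ⟫) := by
  set ℓ : E →ₗ[ℝ] ℝ := (r * ‖η‖⁻¹) • (innerSL ℝ η : E →ₗ[ℝ] ℝ) with hℓ
  have htransvection : ((2 : ℝ)⁻¹ • (ContinuousLinearMap.id ℝ E +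
      ((r * ‖η‖⁻¹) • innerSL ℝ η).smulRight θ) : E →L[ℝ] E).toLinearMap =
        (2 : ℝ)⁻¹ • LinearMap.transvection ℓ θ := by
    ext v
    simp [LinearMap.transvection.apply, hℓ]
  rw [ContinuousLinearMap.det, htransvection, LinearMap.det_smul, LinearMap.transvection.det]
  simp [hℓ]

theorem measurableSet_inner_nonneg [MeasurableSpace E] [OpensMeasurableSpace E] (θ : E) :
    MeasurableSet {η : E | 0 ≤ ⟪η, θ⟫} :=
  (isClosed_le continuous_const (by fun_prop)).measurableSet

theorem setLIntegral_comp_ewaldPoint_le [FiniteDimensional ℝ E] [Nontrivial E]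
    [MeasurableSpace E] [BorelSpace E] (μ : Measure E) [μ.IsAddHaarMeasure]
    {r : ℝ} (hr : 0 ≤ r) (θ : E) (G : E → ℝ≥0∞) :
    ∫⁻ η in {η | 0 ≤ ⟪η, θ⟫}, G (ewaldPoint r η θ) ∂μ ≤ 2 ^ finrank ℝ E * ∫⁻ x, G x ∂μ := by
  set s : Set E := {η | 0 ≤ ⟪η, θ⟫} \ {0}
  set J : E → ℝ := fun η ↦ ((2 : ℝ)⁻¹ •
    (ContinuousLinearMap.id ℝ E + ((r * ‖η‖⁻¹) • innerSL ℝ η).smulRight θ)).det with hJ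
  have hs : MeasurableSet s := (measurableSet_inner_nonneg θ).diff (measurableSet_singleton 0)
  have hJ_ge : ∀ η ∈ s, 1 ≤ 2 ^ finrank ℝ E * ENNReal.ofReal |J η| := by
    intro η hη
    have hη_inner : 0 ≤ r * ‖η‖⁻¹ * ⟪η, θ⟫ := mul_nonneg (by positivity) hη.1
    rw [← ENNReal.ofReal_ofNat, ← ENNReal.ofReal_pow zero_le_two,
      ← ENNReal.ofReal_mul (by positivity), ENNReal.one_le_ofReal, hJ]
    dsimp only
    rw [det_fderiv_ewaldPoint, abs_of_nonneg (by positivity), ← mul_assoc, ← mul_pow]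
    norm_num
    exact hη_inner
  calc ∫⁻ η in {η | 0 ≤ ⟪η, θ⟫}, G (ewaldPoint r η θ) ∂μ
      = ∫⁻ η in s, G (ewaldPoint r η θ) ∂μ :=
        (setLIntegral_congr (sdiff_null_ae_eq_self (measure_singleton 0))).symm
    _ ≤ ∫⁻ η in s, 2 ^ finrank ℝ E * (ENNReal.ofReal |J η| * G (ewaldPoint r η θ)) ∂μ := by
        refine setLIntegral_mono' hs fun η hη ↦ ?_
        rw [← mul_assoc]
        exact le_mul_of_one_le_left' (hJ_ge η hη)
    _ = 2 ^ finrank ℝ E * ∫⁻ x in (fun η ↦ ewaldPoint r η θ) '' s, G x ∂μ := by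
        rw [lintegral_const_mul' _ _ (by finiteness),
          lintegral_image_eq_lintegral_abs_det_fderiv_mul μ hs
            (fun η hη ↦ (hasFDerivAt_ewaldPoint r θ hη.2).hasFDerivWithinAt)
            ((injOn_ewaldPoint hr θ).mono sdiff_subset)]
    _ ≤ 2 ^ finrank ℝ E * ∫⁻ x, G x ∂μ := by
        gcongr
        exact Measure.restrict_le_self

theorem le_norm_ewaldPoint {r : ℝ} (hr : 0 ≤ r) {η θ : E} (hθ : ‖θ‖ = 1) (hηθ : 0 ≤ ⟪η, θ⟫) :
    ‖η‖ * (1 + r) / 4 ≤ ‖ewaldPoint r η θ‖ := by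
  have hsq : ‖η + (r * ‖η‖) • θ‖ ^ 2 = ‖η‖ ^ 2 + 2 * (r * ‖η‖ * ⟪η, θ⟫) + (r * ‖η‖) ^ 2 := by
    rw [norm_add_sq_real, inner_smul_right, norm_smul, hθ, mul_one, Real.norm_eq_abs, sq_abs]
  have hle : ‖η‖ * (1 + r) / 2 ≤ ‖η + (r * ‖η‖) • θ‖ := by
    refine le_of_sq_le_sq ?_ (norm_nonneg _)
    have : 0 ≤ r * ‖η‖ * ⟪η, θ⟫ := by positivity
    rw [hsq]
    nlinarith [sq_nonneg (‖η‖ * (1 - r)), sq_nonneg (‖η‖ * (1 + r))]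
  rw [ewaldPoint, norm_smul_of_nonneg (by norm_num)]
  linarith

theorem mul_norm_sub_le_two_mul_norm_sub_smul {F : Type*} [NormedAddCommGroup F] [NormedSpace ℝ F]
    {r : ℝ} (hr : 0 ≤ r) {ω θ : F} (hω : ‖ω‖ = 1) (hθ : ‖θ‖ = 1) :
    r * ‖ω - θ‖ ≤ 2 * ‖ω - r • θ‖ := by
  have hscale : ‖r • ω - ω‖ ≤ ‖ω - r • θ‖ := by
    calc ‖r • ω - ω‖ = |‖ω‖ - ‖r • θ‖| := by
          rw [show r • ω - ω = (r - 1) • ω by module, norm_smul, norm_smul_of_nonneg hr, hω, hθ,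
            Real.norm_eq_abs, mul_one, mul_one, abs_sub_comm]
      _ ≤ ‖ω - r • θ‖ := abs_norm_sub_norm_le _ _
  calc r * ‖ω - θ‖ = ‖(r • ω - ω) + (ω - r • θ)‖ := by
        rw [sub_add_sub_cancel, ← smul_sub, norm_smul_of_nonneg hr]
    _ ≤ ‖r • ω - ω‖ + ‖ω - r • θ‖ := norm_add_le _ _
    _ ≤ 2 * ‖ω - r • θ‖ := by linarith

open NormedSpace in
theorem norm_normalize_add_smul_sub_le {r : ℝ} (hr : 0 ≤ r) {ω θ : E} (hω : ‖ω‖ = 1)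
    (hθ : ‖θ‖ = 1) (hωθ : 0 ≤ ⟪ω, θ⟫) : ‖normalize (ω + r • θ) - θ‖ ≤ ‖ω - θ‖ := by
  set m := ‖ω + r • θ‖ with hm
  have hm_pos : 0 < m := by
    have : ‖ω‖ ≤ m := norm_le_norm_add_of_inner_nonneg (by rw [inner_smul_right]; positivity)
    linarith
  have hm_le : m ≤ 1 + r := by
    refine (norm_add_le _ _).trans_eq ?_
    rw [hω, norm_smul_of_nonneg hr, hθ, mul_one]
  have hinner_le : ⟪ω, θ⟫ ≤ 1 := by
    simpa [hω, hθ] using real_inner_le_norm ω θ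
  have hunit : ‖normalize (ω + r • θ)‖ = 1 :=
    norm_normalize_eq_one_iff.2 (norm_pos_iff.1 hm_pos)
  have hinner : ⟪ω, θ⟫ ≤ ⟪normalize (ω + r • θ), θ⟫ := by
    rw [NormedSpace.normalize, real_inner_smul_left, inner_add_left, real_inner_smul_left,
      real_inner_self_eq_norm_sq, hθ, ← hm, le_inv_mul_iff₀ hm_pos]
    nlinarith
  refine le_of_sq_le_sq ?_ (norm_nonneg _)
  rw [norm_sub_sq_real, norm_sub_sq_real, hunit, hω]
  linarith

open NormedSpace in
theorem mul_norm_normalize_ewaldPoint_sub_le {r : ℝ} (hr : 0 ≤ r) {η θ : E} (hθ : ‖θ‖ = 1)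
    (hηθ : 0 ≤ ⟪η, θ⟫) :
    r * ‖η‖ / 4 * ‖normalize (ewaldPoint r η θ) - θ‖ ≤ ‖ewaldPoint r η (-θ)‖ := by
  rcases eq_or_ne η 0 with rfl | hη
  · simp
  set ω := normalize η with hω_def
  have hη_pos : 0 < ‖η‖ := norm_pos_iff.2 hη
  have hω : ‖ω‖ = 1 := norm_normalize_eq_one_iff.2 hη
  have hη_eq : ‖η‖ • ω = η := norm_smul_normalize η
  have hωθ : 0 ≤ ⟪ω, θ⟫ := by
    rw [hω_def, NormedSpace.normalize, real_inner_smul_left]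
    positivity
  have hfactor : ∀ τ : E, ewaldPoint r η τ = (‖η‖ / 2) • (ω + r • τ) := by
    intro τ
    nth_rw 1 [ewaldPoint, ← hη_eq]
    module
  have hle : r * ‖normalize (ω + r • θ) - θ‖ ≤ 2 * ‖ω - r • θ‖ :=
    (mul_le_mul_of_nonneg_left (norm_normalize_add_smul_sub_le hr hω hθ hωθ) hr).trans
      (mul_norm_sub_le_two_mul_norm_sub_smul hr hω hθ)
  rw [hfactor, hfactor, normalize_smul_of_pos (by positivity), norm_smul_of_nonneg (by positivity),
    smul_neg, ← sub_eq_add_neg]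
  nlinarith

end Ewald

section Fourier

open Module FourierTransform LineDeriv
open scoped SchwartzMap

section Plancherel

variable {V : Type*} [NormedAddCommGroup V] [InnerProductSpace ℝ V]
  {H : Type*} [NormedAddCommGroup H] [InnerProductSpace ℂ H] [CompleteSpace H]

theorem sq_opNorm_le_sum_sq_norm {ι F : Type*} [Fintype ι] [NormedAddCommGroup F] [NormedSpace ℝ F]
    (b : OrthonormalBasis ι ℝ V) (L : V →L[ℝ] F) : ‖L‖ ^ 2 ≤ ∑ i, ‖L (b i)‖ ^ 2 := by
  have hL : ‖L‖ ≤ √(∑ i, ‖L (b i)‖ ^ 2) := by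
    refine L.opNorm_le_bound (Real.sqrt_nonneg _) fun v ↦ ?_
    calc ‖L v‖ = ‖∑ i, ⟪b i, v⟫ • L (b i)‖ := by
          simp only [← map_smul, ← map_sum, b.sum_repr']
      _ ≤ ∑ i, ‖L (b i)‖ * ‖⟪b i, v⟫‖ := by
          refine (norm_sum_le _ _).trans_eq (Finset.sum_congr rfl fun i _ ↦ ?_)
          rw [norm_smul, mul_comm]
      _ ≤ √(∑ i, ‖L (b i)‖ ^ 2) * √(∑ i, ‖⟪b i, v⟫‖ ^ 2) := Real.sum_mul_le_sqrt_mul_sqrt _ _ _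
      _ = √(∑ i, ‖L (b i)‖ ^ 2) * ‖v‖ := by
          rw [b.sum_sq_norm_inner_right, Real.sqrt_sq (norm_nonneg v)]
  exact (Real.le_sqrt (norm_nonneg L) (by positivity)).1 hL

variable [FiniteDimensional ℝ V] [MeasurableSpace V] [BorelSpace V]

theorem lintegral_enorm_sq_fourier (f : 𝓢(V, H)) :
    ∫⁻ x, ‖(𝓕 f : 𝓢(V, H)) x‖ₑ ^ 2 = ∫⁻ x, ‖f x‖ₑ ^ 2 := by
  have eq_ofReal : ∀ g : 𝓢(V, H), ∫⁻ x, ‖g x‖ₑ ^ 2 = ENNReal.ofReal (∫ x, ‖g x‖ ^ 2) := by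
    intro g
    have hint : Integrable fun x ↦ ‖g x‖ ^ 2 := (g.memLp 2).integrable_norm_pow two_ne_zero
    rw [ofReal_integral_eq_lintegral_ofReal hint (ae_of_all _ fun x ↦ sq_nonneg _)]
    simp only [ENNReal.ofReal_pow (norm_nonneg _), ofReal_norm]
  rw [eq_ofReal, eq_ofReal, SchwartzMap.integral_norm_sq_fourier]

theorem lintegral_enorm_sq_fderiv_fourier_apply (f : 𝓢(V, H)) (m : V) :
    ∫⁻ x, ‖fderiv ℝ (𝓕 f : 𝓢(V, H)) x m‖ₑ ^ 2 =
      ∫⁻ x, ENNReal.ofReal ((2 * Real.pi) ^ 2 * ‖⟪m, x⟫‖ ^ 2) * ‖f x‖ₑ ^ 2 := by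
  have hgrowth : (inner ℝ · m : V → ℝ).HasTemperateGrowth := by fun_prop
  change ∫⁻ x, ‖(∂_{m} (𝓕 f : 𝓢(V, H))) x‖ₑ ^ 2 = _
  rw [SchwartzMap.lineDerivOp_fourier_eq, lintegral_enorm_sq_fourier]
  refine lintegral_congr fun x ↦ ?_
  rw [smul_apply, SchwartzMap.smulLeftCLM_apply_apply hgrowth, ← ofReal_norm, ← ofReal_norm (f x),
    ← ENNReal.ofReal_pow (norm_nonneg _), ← ENNReal.ofReal_pow (norm_nonneg _),
    ← ENNReal.ofReal_mul (by positivity), norm_smul, norm_smul, real_inner_comm]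
  congr 1
  simp [mul_pow]
  ring

theorem sobolevEnergy_fourier_le (f : 𝓢(V, H)) :
    sobolevEnergy volume (𝓕 f : 𝓢(V, H)) ≤
      ∫⁻ x, ENNReal.ofReal (1 + (2 * Real.pi) ^ 2 * ‖x‖ ^ 2) * ‖f x‖ₑ ^ 2 := by
  set b := stdOrthonormalBasis ℝ V
  have hf : Measurable fun x ↦ ‖f x‖ₑ := f.continuous.enorm.measurable
  have hderiv : ∫⁻ x, ‖fderiv ℝ (𝓕 f : 𝓢(V, H)) x‖ₑ ^ 2 ≤
      ∫⁻ x, ENNReal.ofReal ((2 * Real.pi) ^ 2 * ‖x‖ ^ 2) * ‖f x‖ₑ ^ 2 := by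
    have hfderiv : Continuous (fderiv ℝ (𝓕 f : 𝓢(V, H))) :=
      ((𝓕 f : 𝓢(V, H)).smooth 1).continuous_fderiv one_ne_zero
    have hpartial (i) : Measurable fun x ↦ ‖fderiv ℝ (𝓕 f : 𝓢(V, H)) x (b i)‖ₑ :=
      (hfderiv.clm_apply continuous_const).enorm.measurable
    calc ∫⁻ x, ‖fderiv ℝ (𝓕 f : 𝓢(V, H)) x‖ₑ ^ 2
        ≤ ∫⁻ x, ∑ i, ‖fderiv ℝ (𝓕 f : 𝓢(V, H)) x (b i)‖ₑ ^ 2 := by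
          refine lintegral_mono fun x ↦ ?_
          have := ENNReal.ofReal_le_ofReal (sq_opNorm_le_sum_sq_norm b (fderiv ℝ (𝓕 f : 𝓢(V, H)) x))
          rw [ENNReal.ofReal_sum_of_nonneg fun _ _ ↦ by positivity] at this
          simpa only [ENNReal.ofReal_pow (norm_nonneg _), ofReal_norm] using this
      _ = ∑ i, ∫⁻ x, ENNReal.ofReal ((2 * Real.pi) ^ 2 * ‖⟪b i, x⟫‖ ^ 2) * ‖f x‖ₑ ^ 2 := by
          rw [lintegral_finsetSum _ fun i _ ↦ (hpartial i).pow_const 2]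
          simp only [lintegral_enorm_sq_fderiv_fourier_apply]
      _ = ∫⁻ x, ENNReal.ofReal ((2 * Real.pi) ^ 2 * ‖x‖ ^ 2) * ‖f x‖ₑ ^ 2 := by
          rw [← lintegral_finsetSum _ fun i _ ↦ by fun_prop]
          refine lintegral_congr fun x ↦ ?_
          rw [← Finset.sum_mul, ← ENNReal.ofReal_sum_of_nonneg fun _ _ ↦ by positivity,
            ← Finset.mul_sum, b.sum_sq_norm_inner_right]
  have hfourier := (𝓕 f : 𝓢(V, H)).continuous.enorm.measurable.pow_const 2
  rw [sobolevEnergy, lintegral_add_left hfourier, lintegral_enorm_sq_fourier]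
  refine (add_le_add_right hderiv _).trans_eq ?_
  rw [← lintegral_add_left (by fun_prop)]
  refine lintegral_congr fun x ↦ ?_
  rw [ENNReal.ofReal_add zero_le_one (by positivity), ENNReal.ofReal_one, add_mul, one_mul]

end Plancherel

theorem lintegral_comp_inv_smul {E : Type*} [NormedAddCommGroup E] [NormedSpace ℝ E]
    [FiniteDimensional ℝ E] [MeasurableSpace E] [BorelSpace E] (μ : Measure E)
    [μ.IsAddHaarMeasure] {c : ℝ} (hc : 0 < c) (F : E → ℝ≥0∞) :
    ∫⁻ x, F (c⁻¹ • x) ∂μ = ENNReal.ofReal (c ^ finrank ℝ E) * ∫⁻ x, F x ∂μ := by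
  have hemb : MeasurableEmbedding fun x : E ↦ c⁻¹ • x :=
    (Homeomorph.smulOfNeZero c⁻¹ (inv_ne_zero hc.ne')).measurableEmbedding
  rw [← hemb.lintegral_map, Measure.map_addHaar_smul μ (inv_ne_zero hc.ne'),
    lintegral_smul_measure]
  simp [abs_of_pos hc]

section Euc

variable {n : ℕ}

theorem jap_sq (x : Euc n) : jap x ^ 2 = 1 + ‖x‖ ^ 2 := Real.sq_sqrt (by positivity)

theorem one_le_jap (x : Euc n) : 1 ≤ jap x :=
  Real.one_le_sqrt.2 (le_add_of_nonneg_right (sq_nonneg _))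

theorem jap_pos (x : Euc n) : 0 < jap x := zero_lt_one.trans_le (one_le_jap x)

theorem norm_le_jap (x : Euc n) : ‖x‖ ≤ jap x := Real.le_sqrt_of_sq_le (by linarith)

theorem hasTemperateGrowth_jap_rpow (β : ℝ) :
    (fun x : Euc n ↦ jap x ^ β).HasTemperateGrowth := by
  convert! Function.hasTemperateGrowth_one_add_norm_sq_rpow (Euc n) (β / 2) using 2 with x
  rw [jap, Real.sqrt_eq_rpow, ← Real.rpow_mul (by positivity)]
  ring_nf

theorem ft_eq_fourier (f : Euc n → ℂ) (ξ : Euc n) : ft f ξ = 𝓕 f ((2 * Real.pi)⁻¹ • ξ) := by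
  have hpi : (Real.pi : ℂ) ≠ 0 := mod_cast Real.pi_ne_zero
  rw [Real.fourier_eq', ft]
  congr with x
  rw [smul_eq_mul, inner_smul_right, real_inner_comm]
  congr 2
  push_cast
  field_simp

/-- The Schwartz function `⟨ξ⟩^β q̂(ξ)`, whose inverse Fourier transform is `⟨D⟩^β q`. -/
def weightedFourier (β : ℝ) (q : 𝓢(Euc n, ℂ)) : 𝓢(Euc n, ℂ) :=
  SchwartzMap.smulLeftCLM ℂ (fun ξ : Euc n ↦ jap ξ ^ β)
    (SchwartzMap.compCLMOfContinuousLinearEquiv ℂ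
      (ContinuousLinearEquiv.smulLeft (Units.mk0 (2 * Real.pi)⁻¹ (by positivity))) (𝓕 q))

theorem weightedFourier_apply (β : ℝ) (q : 𝓢(Euc n, ℂ)) (ξ : Euc n) :
    weightedFourier β q ξ = ((jap ξ ^ β : ℝ) : ℂ) * ft q ξ := by
  rw [weightedFourier, SchwartzMap.smulLeftCLM_apply_apply (hasTemperateGrowth_jap_rpow β),
    ft_eq_fourier, ← SchwartzMap.fourier_coe, Complex.real_smul]
  rfl

theorem continuous_ft (q : 𝓢(Euc n, ℂ)) : Continuous (ft q) := by
  have : ft q = weightedFourier 0 q := by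
    ext ξ
    simp [weightedFourier_apply]
  rw [this]
  exact (weightedFourier 0 q).continuous

theorem enorm_ft (β : ℝ) (q : 𝓢(Euc n, ℂ)) (ξ : Euc n) :
    ‖ft q ξ‖ₑ = ENNReal.ofReal (jap ξ ^ (-β)) * ‖weightedFourier β q ξ‖ₑ := by
  have hcancel : ft q ξ = (jap ξ ^ (-β)) • weightedFourier β q ξ := by
    rw [weightedFourier_apply, Complex.real_smul, ← mul_assoc, ← Complex.ofReal_mul,
      ← Real.rpow_add (jap_pos ξ), neg_add_cancel, Real.rpow_zero, Complex.ofReal_one, one_mul]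
  rw [hcancel, enorm_smul, Real.enorm_of_nonneg (Real.rpow_nonneg (jap_pos ξ).le _)]

theorem besselD_eq_fourierInv (β : ℝ) (q : 𝓢(Euc n, ℂ)) (x : Euc n) :
    besselD β q x =
      (((2 * Real.pi) ^ n)⁻¹ : ℝ) • 𝓕⁻ (weightedFourier β q) ((2 * Real.pi)⁻¹ • x) := by
  have hpi : (Real.pi : ℂ) ≠ 0 := mod_cast Real.pi_ne_zero
  rw [besselD, SchwartzMap.fourierInv_coe, Real.fourierInv_eq']
  congr with ξ
  rw [smul_eq_mul, inner_smul_right, weightedFourier_apply]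
  congr 2
  push_cast
  field_simp

theorem eLpNorm_two_sq {X F : Type*} [MeasurableSpace X] [NormedAddCommGroup F]
    (μ : Measure X) (f : X → F) : eLpNorm f 2 μ ^ 2 = ∫⁻ x, ‖f x‖ₑ ^ 2 ∂μ := by
  simpa using eLpNorm_nnreal_pow_eq_lintegral (μ := μ) (f := f) (p := 2) two_ne_zero

theorem wSobNorm_one_sq (β : ℝ) (q : 𝓢(Euc n, ℂ)) :
    ENNReal.ofReal ((2 * Real.pi) ^ n) * wSobNorm β 1 q ^ 2 =
      ∫⁻ x, ENNReal.ofReal (1 + (2 * Real.pi) ^ 2 * ‖x‖ ^ 2) *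
        ‖𝓕⁻ (weightedFourier β q) x‖ₑ ^ 2 := by
  set c : ℝ := 2 * Real.pi
  have hc : 0 < c := by positivity
  set h := 𝓕⁻ (weightedFourier β q)
  set Φ : Euc n → ℝ≥0∞ := fun y ↦ ENNReal.ofReal (1 + c ^ 2 * ‖y‖ ^ 2) * ‖h y‖ₑ ^ 2
  have hintegrand : ∀ x : Euc n, ‖(jap x ^ (1 : ℝ)) • besselD β q x‖ₑ ^ 2 =
      ENNReal.ofReal ((c ^ n)⁻¹ ^ 2) * Φ (c⁻¹ • x) := by
    intro x
    have hnorm : c ^ 2 * ‖c⁻¹ • x‖ ^ 2 = ‖x‖ ^ 2 := by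
      rw [norm_smul_of_nonneg (by positivity)]
      field_simp
    rw [besselD_eq_fourierInv, Real.rpow_one, enorm_smul, enorm_smul, mul_pow, mul_pow,
      Real.enorm_of_nonneg (jap_pos x).le, Real.enorm_of_nonneg (by positivity),
      ← ENNReal.ofReal_pow (jap_pos x).le, ← ENNReal.ofReal_pow (by positivity), jap_sq]
    simp only [Φ, hnorm]
    ring
  have hconst : c ^ n * ((c ^ n)⁻¹ ^ 2 * c ^ n) = 1 := by field_simp
  rw [wSobNorm, eLpNorm_two_sq, lintegral_congr hintegrand,
    lintegral_const_mul' _ _ ENNReal.ofReal_ne_top, lintegral_comp_inv_smul _ hc,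
    finrank_euclideanSpace_fin, ← mul_assoc, ← mul_assoc, ← ENNReal.ofReal_mul (by positivity),
    ← ENNReal.ofReal_mul (by positivity), mul_assoc, hconst, ENNReal.ofReal_one, one_mul]

theorem sobolevEnergy_weightedFourier_le (β : ℝ) (q : 𝓢(Euc n, ℂ)) :
    sobolevEnergy volume (weightedFourier β q) ≤
      ENNReal.ofReal ((2 * Real.pi) ^ n) * wSobNorm β 1 q ^ 2 := by
  rw [wSobNorm_one_sq]
  simpa using sobolevEnergy_fourier_le (𝓕⁻ (weightedFourier β q))

end Euc

end Fourier

section HalfSphere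

open Metric
open scoped NNReal Pointwise Topology

variable {E : Type*} [NormedAddCommGroup E] [InnerProductSpace ℝ E] [FiniteDimensional ℝ E]
  [MeasurableSpace E] [BorelSpace E] (μ : Measure E) [μ.IsAddHaarMeasure]

theorem measurePreserving_neg_toSphere :
    MeasurePreserving (Neg.neg : sphere (0 : E) 1 → sphere (0 : E) 1) μ.toSphere μ.toSphere := by
  refine ⟨continuous_neg.measurable, Measure.ext fun s hs ↦ ?_⟩
  have hcone : Ioo (0 : ℝ) 1 • ((↑) '' (Neg.neg ⁻¹' s : Set (sphere (0 : E) 1)) : Set E) =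
      -(Ioo (0 : ℝ) 1 • ((↑) '' s : Set E)) := by
    rw [← Set.smul_neg, ← image_neg_eq_neg (s := ((↑) '' s : Set E)), neg_preimage,
      ← image_neg_eq_neg, image_image, image_image]
    rfl
  rw [Measure.map_apply continuous_neg.measurable hs, μ.toSphere_apply' hs,
    μ.toSphere_apply' (continuous_neg.measurable hs), hcone, Measure.measure_neg]

theorem lintegral_toSphere_le_two_mul_setLIntegral (η : E) {a : sphere (0 : E) 1 → ℝ≥0∞}
    (ha : ∀ θ, a (-θ) = a θ) :
    ∫⁻ θ, a θ ∂μ.toSphere ≤ 2 * ∫⁻ θ in {θ | 0 ≤ ⟪η, (θ : E)⟫}, a θ ∂μ.toSphere := by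
  have hcover : (univ : Set (sphere (0 : E) 1)) ⊆
      {θ | 0 ≤ ⟪η, (θ : E)⟫} ∪ Neg.neg ⁻¹' {θ | 0 ≤ ⟪η, (θ : E)⟫} := by
    intro θ _
    simpa using le_total 0 ⟪η, (θ : E)⟫
  calc ∫⁻ θ, a θ ∂μ.toSphere
      ≤ ∫⁻ θ in {θ | 0 ≤ ⟪η, (θ : E)⟫}, a θ ∂μ.toSphere +
        ∫⁻ θ in Neg.neg ⁻¹' {θ | 0 ≤ ⟪η, (θ : E)⟫}, a (-θ) ∂μ.toSphere := by
        simp only [ha]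
        rw [← setLIntegral_univ]
        exact (lintegral_mono_set hcover).trans (lintegral_union_le _ _ _)
    _ = 2 * ∫⁻ θ in {θ | 0 ≤ ⟪η, (θ : E)⟫}, a θ ∂μ.toSphere := by
        rw [(measurePreserving_neg_toSphere μ).setLIntegral_comp_preimage_emb
          (Homeomorph.neg _).measurableEmbedding, two_mul]

theorem exists_lintegral_toSphere_enorm_sub_rpow_neg_le {s : ℝ} (hs : 0 ≤ s)
    (hsd : s < Module.finrank ℝ E - 1) :
    ∃ C : ℝ≥0, ∀ ω : sphere (0 : E) 1, ∫⁻ θ, ‖(ω : E) - θ‖ₑ ^ (-s) ∂μ.toSphere ≤ C := by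
  have hdim : 1 ≤ Module.finrank ℝ E := by
    exact_mod_cast (by linarith : (1 : ℝ) ≤ Module.finrank ℝ E)
  set A : ℝ≥0∞ := 2 ^ Module.finrank ℝ E * μ (ball 0 1)
  have hA : A ≠ ⊤ := ENNReal.mul_ne_top (by finiteness) measure_ball_lt_top.ne
  have hball : ∀ (ω : sphere (0 : E) 1) (ε : ℝ), 0 < ε →
      μ.toSphere (ball ω ε) ≤ A * ENNReal.ofReal (ε ^ ((Module.finrank ℝ E : ℝ) - 1)) := by
    intro ω ε hε
    rw [← Nat.cast_pred hdim, Real.rpow_natCast]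
    exact toSphere_ball_le μ ω hε
  lift μ.toSphere univ + A * ENNReal.ofReal (s / (Module.finrank ℝ E - 1 - s)) to ℝ≥0
    using (by finiteness) with C hC
  refine ⟨C, fun ω ↦ ?_⟩
  simpa only [← edist_eq_enorm_sub, edist_comm, Subtype.edist_eq, hC] using
    lintegral_edist_rpow_neg_le hA (hball ω) hs hsd

theorem sq_lintegral_mul_le {X : Type*} [MeasurableSpace X] (ν : Measure X) {u v : X → ℝ≥0∞}
    (hu : AEMeasurable u ν) (hv : AEMeasurable v ν) :
    (∫⁻ x, u x * v x ∂ν) ^ 2 ≤ (∫⁻ x, u x ^ 2 ∂ν) * ∫⁻ x, v x ^ 2 ∂ν := by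
  have holder := ENNReal.lintegral_mul_le_Lp_mul_Lq ν Real.HolderConjugate.two_two hu hv
  have half_sq : ∀ c : ℝ≥0∞, (c ^ (1 / 2 : ℝ)) ^ 2 = c := fun c ↦ by
    rw [← ENNReal.rpow_mul_natCast]
    norm_num
  simp only [ENNReal.rpow_two] at holder
  calc (∫⁻ x, u x * v x ∂ν) ^ 2
      ≤ ((∫⁻ x, u x ^ 2 ∂ν) ^ (1 / 2 : ℝ) * (∫⁻ x, v x ^ 2 ∂ν) ^ (1 / 2 : ℝ)) ^ 2 :=
        pow_le_pow_left₀ zero_le holder 2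
    _ = (∫⁻ x, u x ^ 2 ∂ν) * ∫⁻ x, v x ^ 2 ∂ν := by rw [mul_pow, half_sq, half_sq]

variable {F : Type*} [NormedAddCommGroup F]

/-- The mass density `|g(x)|²` weighted by the singular factor `|x/|x| - θ|^{-s}`, which blows up
as the direction of `x` approaches `θ`. -/
def angularDensity (s : ℝ) (g : E → F) (x θ : E) : ℝ≥0∞ :=
  ‖g x‖ₑ ^ 2 * ‖NormedSpace.normalize x - θ‖ₑ ^ (-s)

theorem measurable_angularDensity (s : ℝ) {g : E → F} (hg : Continuous g) :
    Measurable fun p : E × E ↦ angularDensity s g p.1 p.2 := by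
  have : Measurable fun x ↦ ‖g x‖ₑ := hg.enorm.measurable
  unfold angularDensity NormedSpace.normalize
  exact ((this.comp measurable_fst).pow_const 2).mul (by fun_prop)

theorem measurable_angularDensity_ewaldPoint (s r : ℝ) {g : E → F} (hg : Continuous g) :
    Measurable fun p : E × E ↦ angularDensity s g (ewaldPoint r p.1 p.2) p.2 := by
  have hpoint : Measurable fun p : E × E ↦ (ewaldPoint r p.1 p.2, p.2) :=
    (continuous_ewaldPoint r).measurable.prodMk measurable_snd
  simpa only [Function.comp_def] using (measurable_angularDensity s hg).comp hpoint

theorem exists_lintegral_angularDensity_le [Nontrivial E] {s : ℝ} (hs : 0 ≤ s)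
    (hsd : s < Module.finrank ℝ E - 1) :
    ∃ C : ℝ≥0, ∀ g : E → F, ∫⁻ x, ∫⁻ θ, angularDensity s g x (θ : sphere (0 : E) 1) ∂μ.toSphere ∂μ
      ≤ C * ∫⁻ x, ‖g x‖ₑ ^ 2 ∂μ := by
  obtain ⟨C, hC⟩ := exists_lintegral_toSphere_enorm_sub_rpow_neg_le μ hs hsd
  refine ⟨C, fun g ↦ ?_⟩
  rw [← lintegral_const_mul' _ _ ENNReal.coe_ne_top]
  refine lintegral_mono_ae ?_
  filter_upwards [compl_mem_ae_iff.2 (measure_singleton (0 : E))] with x hx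
  simp only [angularDensity]
  rw [lintegral_const_mul' _ _ (by finiteness), mul_comm]
  gcongr
  exact hC ⟨NormedSpace.normalize x, by simpa using NormedSpace.norm_normalize_eq_one_iff.2 hx⟩

theorem exists_lintegral_angularDensity_ewaldPoint_le [Nontrivial E] {s : ℝ} (hs : 0 ≤ s)
    (hsd : s < Module.finrank ℝ E - 1) :
    ∃ C : ℝ≥0, ∀ (g : E → F) (r : ℝ), Continuous g → 0 ≤ r →
      ∫⁻ η, ∫⁻ θ in {θ : sphere (0 : E) 1 | 0 ≤ ⟪η, (θ : E)⟫},
        angularDensity s g (ewaldPoint r η θ) θ ∂μ.toSphere ∂μ ≤ C * ∫⁻ x, ‖g x‖ₑ ^ 2 ∂μ := by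
  obtain ⟨C, hC⟩ := exists_lintegral_angularDensity_le (F := F) μ hs hsd
  refine ⟨2 ^ Module.finrank ℝ E * C, fun g r hg hr ↦ ?_⟩
  set half : Set (E × sphere (0 : E) 1) := {p | 0 ≤ ⟪p.1, (p.2 : E)⟫}
  have half_meas : MeasurableSet half :=
    (isClosed_le continuous_const (by fun_prop)).measurableSet
  set Φ : E → sphere (0 : E) 1 → ℝ≥0∞ := fun η θ ↦
    half.indicator (fun p ↦ angularDensity s g (ewaldPoint r p.1 p.2) p.2) (η, θ)
  have Φ_meas : Measurable (Function.uncurry Φ) :=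
    ((measurable_angularDensity_ewaldPoint s r hg).comp
      (measurable_fst.prodMk measurable_snd.subtype_coe)).indicator half_meas
  calc ∫⁻ η, ∫⁻ θ in {θ : sphere (0 : E) 1 | 0 ≤ ⟪η, (θ : E)⟫},
        angularDensity s g (ewaldPoint r η θ) θ ∂μ.toSphere ∂μ
      = ∫⁻ η, ∫⁻ θ, Φ η θ ∂μ.toSphere ∂μ :=
        lintegral_congr fun η ↦ (lintegral_indicator (measurable_prodMk_left half_meas) _).symm
    _ = ∫⁻ θ, ∫⁻ η, Φ η θ ∂μ ∂μ.toSphere := lintegral_lintegral_swap Φ_meas.aemeasurable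
    _ ≤ ∫⁻ θ, 2 ^ Module.finrank ℝ E * ∫⁻ x, angularDensity s g x θ ∂μ ∂μ.toSphere := by
        refine lintegral_mono fun θ ↦ ?_
        refine le_trans (le_of_eq ?_) (setLIntegral_comp_ewaldPoint_le μ hr (θ : E) _)
        rw [← lintegral_indicator (measurableSet_inner_nonneg _)]
        rfl
    _ = 2 ^ Module.finrank ℝ E * ∫⁻ x, ∫⁻ θ, angularDensity s g x (θ : sphere (0 : E) 1)
          ∂μ.toSphere ∂μ := by
        rw [lintegral_const_mul' _ _ (by finiteness), lintegral_lintegral_swap]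
        exact ((measurable_angularDensity s hg).comp
          (measurable_snd.prodMk measurable_fst.subtype_coe)).aemeasurable
    _ ≤ (2 ^ Module.finrank ℝ E * C : ℝ≥0) * ∫⁻ x, ‖g x‖ₑ ^ 2 ∂μ := by
        push_cast
        rw [mul_assoc]
        gcongr
        exact hC g

theorem sq_setLIntegral_ewaldPoint_le [Nontrivial E] [InnerProductSpace ℝ F] {g : E → F}
    (hg : ContDiff ℝ 1 g) (hlim : Tendsto g (Bornology.cobounded E) (𝓝 0)) {r : ℝ} (hr : 0 ≤ r)
    (η : E) (s : ℝ) (A : Set (sphere (0 : E) 1)) :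
    ENNReal.ofReal ((r * ‖η‖ / 2) ^ (Module.finrank ℝ E - 1)) *
      (∫⁻ θ in A, ‖g (ewaldPoint r η θ)‖ₑ *
        ‖NormedSpace.normalize (ewaldPoint r η (θ : E)) - θ‖ₑ ^ (-s) *
          ‖g (ewaldPoint r η (-θ))‖ₑ ∂μ.toSphere) ^ 2 ≤
      sobolevEnergy μ g *
        ∫⁻ θ in A, angularDensity (2 * s) g (ewaldPoint r η θ) θ ∂μ.toSphere := by
  set R := r * ‖η‖ / 2
  have hpoint : Continuous fun θ : sphere (0 : E) 1 ↦ ewaldPoint r η θ :=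
    (continuous_ewaldPoint r).comp (by fun_prop : Continuous fun θ : sphere (0 : E) 1 ↦
      (η, (θ : E)))
  have hmeas : Measurable fun θ : sphere (0 : E) 1 ↦ ‖g (ewaldPoint r η θ)‖ₑ :=
    (hg.continuous.comp hpoint).enorm.measurable
  have hsing : Measurable fun θ : sphere (0 : E) 1 ↦
      ‖NormedSpace.normalize (ewaldPoint r η (θ : E)) - θ‖ₑ ^ (-s) := by
    have := hpoint.measurable
    unfold NormedSpace.normalize
    fun_prop
  have htrace : ENNReal.ofReal (R ^ (Module.finrank ℝ E - 1)) *
      ∫⁻ θ in A, ‖g (ewaldPoint r η (-θ))‖ₑ ^ 2 ∂μ.toSphere ≤ sobolevEnergy μ g := by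
    have hneg : ∫⁻ θ in A, ‖g (ewaldPoint r η (-θ))‖ₑ ^ 2 ∂μ.toSphere ≤
        ∫⁻ θ, ‖g (ewaldPoint r η (θ : sphere (0 : E) 1))‖ₑ ^ 2 ∂μ.toSphere := by
      rw [← (measurePreserving_neg_toSphere μ).lintegral_comp (hmeas.pow_const 2)]
      simpa only [coe_neg_sphere] using setLIntegral_le_lintegral _ _
    refine (mul_le_mul_right hneg _).trans ?_
    simp only [ewaldPoint_eq_add_smul]
    exact lintegral_toSphere_enorm_sq_le_sobolevEnergy μ hg hlim _ (by positivity)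
  have hsq : ∀ θ : sphere (0 : E) 1, (‖g (ewaldPoint r η θ)‖ₑ *
      ‖NormedSpace.normalize (ewaldPoint r η (θ : E)) - θ‖ₑ ^ (-s)) ^ 2 =
        angularDensity (2 * s) g (ewaldPoint r η θ) θ := by
    intro θ
    rw [angularDensity, mul_pow, ← ENNReal.rpow_mul_natCast]
    congr 2
    push_cast
    ring
  have hcs := sq_lintegral_mul_le (μ.toSphere.restrict A) (hmeas.mul hsing).aemeasurable
    (hmeas.comp continuous_neg.measurable).aemeasurable
  simp only [Function.comp_def, coe_neg_sphere, Pi.mul_apply, hsq] at hcs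
  refine (mul_le_mul_right hcs _).trans ?_
  rw [mul_left_comm, mul_comm (sobolevEnergy μ g)]
  exact mul_le_mul_right htrace _

end HalfSphere

section EwaldIntegral

open Metric
open scoped NNReal SchwartzMap

variable {n : ℕ}

theorem exists_lintegral_ewaldM_le (hn : 2 ≤ n) :
    ∃ c : ℝ≥0, ∀ (r : ℝ) (η : Euc n) (F : Euc n → ℝ≥0∞), 0 < r → η ≠ 0 → Measurable F →
      ∫⁻ ξ, F ξ ∂ewaldM n r η ≤ c * ENNReal.ofReal ((r * ‖η‖ / 2) ^ (n - 1)) *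
        ∫⁻ θ, F (ewaldPoint r η (θ : sphere (0 : Euc n) 1)) ∂volume.toSphere := by
  have hdim : Module.finrank ℝ (Euc n) = n := finrank_euclideanSpace_fin
  obtain ⟨c, hc⟩ :=
    exists_hausdorffMeasure_sphere_le_smul_toSphere (volume : Measure (Euc n)) (hdim.symm ▸ hn)
  rw [hdim] at hc
  refine ⟨c, fun r η F hr hη hF ↦ ?_⟩
  have hR : 0 < r * ‖η‖ / 2 := by positivity
  have hcast : ((n - 1 : ℕ) : ℝ) = n - 1 := Nat.cast_pred (by omega)
  rw [ewaldM, lintegral_sphere_hausdorffMeasure _ hR (hcast ▸ Nat.cast_nonneg _) hF, ← hcast,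
    Real.rpow_natCast, mul_comm (c : ℝ≥0∞), mul_assoc, hcast]
  simp only [← ewaldPoint_eq_add_smul]
  gcongr
  refine (lintegral_mono' hc le_rfl).trans_eq ?_
  rw [lintegral_smul_measure, ENNReal.smul_def, smul_eq_mul]

theorem exists_enorm_integral_ewaldM_mul_sub_le (hn : 2 ≤ n) :
    ∃ c : ℝ≥0, ∀ (r : ℝ) (η : Euc n) (f : Euc n → ℂ), 0 < r → η ≠ 0 → Continuous f →
      ‖∫ ξ, f ξ * f (η - ξ) ∂ewaldM n r η‖ₑ ≤ c * ENNReal.ofReal ((r * ‖η‖ / 2) ^ (n - 1)) *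
        ∫⁻ θ in {θ : sphere (0 : Euc n) 1 | 0 ≤ ⟪η, (θ : Euc n)⟫},
          ‖f (ewaldPoint r η θ)‖ₑ * ‖f (ewaldPoint r η (-θ))‖ₑ ∂volume.toSphere := by
  obtain ⟨c, hc⟩ := exists_lintegral_ewaldM_le hn
  refine ⟨c * 2, fun r η f hr hη hf ↦ ?_⟩
  have hsymm := lintegral_toSphere_le_two_mul_setLIntegral (volume : Measure (Euc n)) η
    (a := fun θ ↦ ‖f (ewaldPoint r η θ)‖ₑ * ‖f (ewaldPoint r η (-θ))‖ₑ)
    fun θ ↦ by simp only [coe_neg_sphere, neg_neg, mul_comm]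
  calc ‖∫ ξ, f ξ * f (η - ξ) ∂ewaldM n r η‖ₑ
      ≤ ∫⁻ ξ, ‖f ξ * f (η - ξ)‖ₑ ∂ewaldM n r η := enorm_integral_le_lintegral_enorm _
    _ ≤ c * ENNReal.ofReal ((r * ‖η‖ / 2) ^ (n - 1)) *
          ∫⁻ θ, ‖f (ewaldPoint r η (θ : sphere (0 : Euc n) 1))‖ₑ *
            ‖f (ewaldPoint r η (-θ))‖ₑ ∂volume.toSphere := by
        have hcont : Continuous fun ξ ↦ f ξ * f (η - ξ) := by fun_prop
        simpa only [enorm_mul, sub_ewaldPoint] using hc r η _ hr hη hcont.enorm.measurable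
    _ ≤ _ := (mul_le_mul_right hsymm _).trans_eq (by push_cast; ring)

theorem enorm_ft_ewaldPoint_le {β : ℝ} (hβ : 0 ≤ β) (q : 𝓢(Euc n, ℂ)) {r : ℝ} (hr : 0 ≤ r)
    {η θ : Euc n} (hη : η ≠ 0) (hθ : ‖θ‖ = 1) (hηθ : 0 ≤ ⟪η, θ⟫) :
    ‖ft q (ewaldPoint r η θ)‖ₑ ≤ ENNReal.ofReal ((‖η‖ * (1 + r) / 4) ^ (-β)) *
      ‖weightedFourier β q (ewaldPoint r η θ)‖ₑ := by
  rw [enorm_ft β]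
  gcongr ENNReal.ofReal ?_ * _
  exact Real.rpow_le_rpow_of_nonpos (by positivity)
    ((le_norm_ewaldPoint hr hθ hηθ).trans (norm_le_jap _)) (neg_nonpos.2 hβ)

theorem enorm_ft_ewaldPoint_neg_le {b β : ℝ} (hb : 0 ≤ b) (hbβ : b ≤ β) (q : 𝓢(Euc n, ℂ)) {r : ℝ}
    (hr : 0 < r) {η θ : Euc n} (hη : η ≠ 0) (hθ : ‖θ‖ = 1) (hηθ : 0 ≤ ⟪η, θ⟫) :
    ‖ft q (ewaldPoint r η (-θ))‖ₑ ≤ ENNReal.ofReal ((r * ‖η‖ / 4) ^ (-b)) *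
      ‖NormedSpace.normalize (ewaldPoint r η θ) - θ‖ₑ ^ (-b) *
        ‖weightedFourier β q (ewaldPoint r η (-θ))‖ₑ := by
  rw [enorm_ft β]
  gcongr
  set ξ := ewaldPoint r η (-θ)
  set ω := NormedSpace.normalize (ewaldPoint r η θ)
  calc ENNReal.ofReal (jap ξ ^ (-β)) ≤ ENNReal.ofReal (jap ξ ^ (-b)) := by
        gcongr
        exact one_le_jap ξ
    _ = ENNReal.ofReal (jap ξ) ^ (-b) := (ENNReal.ofReal_rpow_of_pos (jap_pos ξ)).symm
    _ ≤ (ENNReal.ofReal (r * ‖η‖ / 4) * ‖ω - θ‖ₑ) ^ (-b) := by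
        rw [ENNReal.rpow_neg, ENNReal.rpow_neg, ← ofReal_norm, ← ENNReal.ofReal_mul (by positivity)]
        gcongr
        exact (mul_norm_normalize_ewaldPoint_sub_le hr.le hθ hηθ).trans (norm_le_jap ξ)
    _ = ENNReal.ofReal ((r * ‖η‖ / 4) ^ (-b)) * ‖ω - θ‖ₑ ^ (-b) := by
        rw [ENNReal.mul_rpow_of_ne_top ENNReal.ofReal_ne_top enorm_ne_top,
          ENNReal.ofReal_rpow_of_pos (by positivity)]

theorem nontrivial_euc (hn : 1 ≤ n) : Nontrivial (Euc n) :=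
  Module.nontrivial_of_finrank_pos (R := ℝ) (by rwa [finrank_euclideanSpace_fin])

theorem exists_sq_enorm_integral_ewaldM_ft_le (hn : 2 ≤ n) :
    ∃ C : ℝ≥0, ∀ (b β : ℝ) (q : 𝓢(Euc n, ℂ)) (r : ℝ) (η : Euc n), 0 ≤ b → b ≤ β → 0 < r → η ≠ 0 →
      ‖∫ ξ, ft q ξ * ft q (η - ξ) ∂ewaldM n r η‖ₑ ^ 2 ≤
        C * ENNReal.ofReal ((r * ‖η‖ / 2) ^ (n - 1) *
          ((‖η‖ * (1 + r) / 4) ^ (-β) * (r * ‖η‖ / 4) ^ (-b)) ^ 2) *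
        sobolevEnergy volume (weightedFourier β q) *
        ∫⁻ θ in {θ : sphere (0 : Euc n) 1 | 0 ≤ ⟪η, (θ : Euc n)⟫},
          angularDensity (2 * b) (weightedFourier β q) (ewaldPoint r η θ) θ ∂volume.toSphere := by
  obtain ⟨c, hc⟩ := exists_enorm_integral_ewaldM_mul_sub_le hn
  refine ⟨c ^ 2, fun b β q r η hb hbβ hr hη ↦ ?_⟩
  set g := weightedFourier β q
  set half : Set (sphere (0 : Euc n) 1) := {θ | 0 ≤ ⟪η, (θ : Euc n)⟫}
  have half_meas : MeasurableSet half :=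
    (isClosed_le continuous_const (by fun_prop)).measurableSet
  set P := ENNReal.ofReal ((r * ‖η‖ / 2) ^ (n - 1))
  set k := (‖η‖ * (1 + r) / 4) ^ (-β) * (r * ‖η‖ / 4) ^ (-b) with hk
  have hPk : ENNReal.ofReal ((r * ‖η‖ / 2) ^ (n - 1) * k ^ 2) = P * ENNReal.ofReal k ^ 2 := by
    rw [ENNReal.ofReal_mul (by positivity), ENNReal.ofReal_pow (p := k) (by positivity)]
  set I := ∫⁻ θ in half, ‖g (ewaldPoint r η θ)‖ₑ *
    ‖NormedSpace.normalize (ewaldPoint r η (θ : Euc n)) - θ‖ₑ ^ (-b) *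
      ‖g (ewaldPoint r η (-θ))‖ₑ ∂volume.toSphere
  have hpointwise : ∫⁻ θ in half, ‖ft q (ewaldPoint r η θ)‖ₑ *
      ‖ft q (ewaldPoint r η (-θ))‖ₑ ∂volume.toSphere ≤ ENNReal.ofReal k * I := by
    rw [← lintegral_const_mul' _ _ ENNReal.ofReal_ne_top]
    refine setLIntegral_mono' half_meas fun θ hθ ↦ ?_
    refine (mul_le_mul' (enorm_ft_ewaldPoint_le (hb.trans hbβ) q hr.le hη
      (norm_eq_of_mem_sphere θ) hθ) (enorm_ft_ewaldPoint_neg_le hb hbβ q hr hη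
      (norm_eq_of_mem_sphere θ) hθ)).trans_eq ?_
    rw [hk, ENNReal.ofReal_mul (by positivity)]
    ring
  have : Nontrivial (Euc n) := nontrivial_euc (by omega)
  have henergy := sq_setLIntegral_ewaldPoint_le volume (g.smooth 1)
    (Metric.cobounded_eq_cocompact (α := Euc n) ▸ g.toZeroAtInfty.zero_at_infty') hr.le η b half
  rw [finrank_euclideanSpace_fin] at henergy
  calc ‖∫ ξ, ft q ξ * ft q (η - ξ) ∂ewaldM n r η‖ₑ ^ 2
      ≤ (c * P * (ENNReal.ofReal k * I)) ^ 2 := by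
        gcongr
        exact (hc r η (ft q) hr hη (continuous_ft q)).trans (mul_le_mul_right hpointwise _)
    _ = (c ^ 2 : ℝ≥0) * (P * ENNReal.ofReal k ^ 2) * (P * I ^ 2) := by
        push_cast
        ring
    _ ≤ _ := by
        rw [hPk, mul_assoc _ (sobolevEnergy _ _)]
        gcongr

end EwaldIntegral

section WeightedEstimate

open scoped NNReal SchwartzMap

theorem pow_mul_rpow_neg_mul_rpow_neg_sq_le {m : ℕ} {s ρ β b : ℝ} (hs : 0 < s) (hsρ : s ≤ ρ)
    (hb : 2 * b ≤ m) : s ^ m * (ρ ^ (-β) * s ^ (-b)) ^ 2 ≤ ρ ^ (m - 2 * β - 2 * b) := by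
  have hρ : 0 < ρ := hs.trans_le hsρ
  calc s ^ m * (ρ ^ (-β) * s ^ (-b)) ^ 2 = s ^ (m - 2 * b) * ρ ^ (-β * 2) := by
        rw [mul_pow, ← Real.rpow_mul_natCast hρ.le, ← Real.rpow_mul_natCast hs.le, sub_eq_add_neg,
          Real.rpow_add hs, Real.rpow_natCast]
        push_cast
        ring_nf
    _ ≤ ρ ^ (m - 2 * b) * ρ ^ (-β * 2) := by
        gcongr
    _ = ρ ^ (m - 2 * β - 2 * b) := by
        rw [← Real.rpow_add hρ]
        ring_nf

variable {n : ℕ}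

theorem jap_le_mul_norm {a : ℝ} (ha : 0 < a) {x : Euc n} (hx : a ≤ ‖x‖) :
    jap x ≤ (1 + a⁻¹) * ‖x‖ := by
  have hone : 1 ≤ a⁻¹ * ‖x‖ := (le_inv_mul_iff₀ ha).2 (by rwa [mul_one])
  calc jap x ≤ 1 + ‖x‖ := Real.sqrt_le_iff.2 ⟨by positivity, by nlinarith [norm_nonneg x]⟩
    _ ≤ (1 + a⁻¹) * ‖x‖ := by linarith

theorem jap_rpow_le_mul_norm_rpow {a α γ : ℝ} (ha : 0 < a) {x : Euc n} (hx : a ≤ ‖x‖)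
    (hαγ : α ≤ γ) (hγ : 0 ≤ γ) : jap x ^ α ≤ ((1 + a⁻¹) * ‖x‖) ^ γ :=
  (Real.rpow_le_rpow_of_exponent_le (one_le_jap x) hαγ).trans
    (Real.rpow_le_rpow (jap_pos x).le (jap_le_mul_norm ha hx) hγ)

theorem jap_rpow_mul_ewald_weight_le (hn : 1 ≤ n) {α β b γ a r : ℝ} {η : Euc n}
    (hb : 2 * b ≤ n - 1) (hγ : 2 * γ = 3 + 2 * β + 2 * b - n) (hγ_nonneg : 0 ≤ γ) (hαγ : α ≤ γ)
    (ha : 0 < a) (hr : 0 < r) (hη : a ≤ ‖η‖) :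
    (jap η ^ α * (2 / (‖η‖ * (1 + r)))) ^ 2 * ((r * ‖η‖ / 2) ^ (n - 1) *
      ((‖η‖ * (1 + r) / 4) ^ (-β) * (r * ‖η‖ / 4) ^ (-b)) ^ 2) ≤
    2 ^ n * ((4 * (1 + a⁻¹)) ^ γ * (1 + r) ^ (-γ)) ^ 2 := by
  have hη_pos : 0 < ‖η‖ := ha.trans_le hη
  have hcast : ((n - 1 : ℕ) : ℝ) = n - 1 := Nat.cast_pred hn
  set ρ := ‖η‖ * (1 + r) / 4 with hρ
  set s := r * ‖η‖ / 4 with hs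
  have hρ_pos : 0 < ρ := by positivity
  have hjap : jap η ^ α ≤ ((4 * (1 + a⁻¹)) * (1 + r)⁻¹ * ρ) ^ γ := by
    convert! jap_rpow_le_mul_norm_rpow ha hη hαγ hγ_nonneg using 2
    rw [hρ]
    field_simp
  have hdecay : (r * ‖η‖ / 2) ^ (n - 1) * (ρ ^ (-β) * s ^ (-b)) ^ 2 ≤
      2 ^ (n - 1) * (ρ * ρ ^ (-γ)) ^ 2 := by
    have hsρ : s ≤ ρ := by
      rw [hs, hρ]
      linarith
    rw [show r * ‖η‖ / 2 = 2 * s by rw [hs]; ring, mul_pow, mul_assoc]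
    gcongr
    refine (pow_mul_rpow_neg_mul_rpow_neg_sq_le (by positivity) hsρ (hcast ▸ hb)).trans_eq ?_
    rw [hcast, mul_pow, ← Real.rpow_mul_natCast hρ_pos.le, ← Real.rpow_natCast ρ 2,
      ← Real.rpow_add hρ_pos]
    push_cast
    congr 1
    linarith
  calc _ ≤ (((4 * (1 + a⁻¹)) * (1 + r)⁻¹ * ρ) ^ γ * (2 * ρ)⁻¹) ^ 2 *
        (2 ^ (n - 1) * (ρ * ρ ^ (-γ)) ^ 2) := by
        rw [show 2 / (‖η‖ * (1 + r)) = (2 * ρ)⁻¹ by rw [hρ]; field_simp; norm_num]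
        have := jap_pos η
        gcongr
    _ = 2 ^ (n - 1) / 4 * ((4 * (1 + a⁻¹)) ^ γ * (1 + r) ^ (-γ)) ^ 2 := by
        rw [Real.mul_rpow (by positivity) hρ_pos.le, Real.mul_rpow (by positivity) (by positivity),
          Real.inv_rpow (by positivity), Real.rpow_neg hρ_pos.le, Real.rpow_neg (by positivity)]
        field_simp
        norm_num
    _ ≤ 2 ^ n * ((4 * (1 + a⁻¹)) ^ γ * (1 + r) ^ (-γ)) ^ 2 := by
        gcongr
        exact (div_le_self (by positivity) (by norm_num)).trans
          (pow_le_pow_right₀ one_le_two (n.sub_le 1))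

theorem exists_sq_enorm_jap_smul_Sr_le (hn : 2 ≤ n) :
    ∃ C : ℝ≥0, ∀ (α β b γ a r : ℝ) (q : 𝓢(Euc n, ℂ)) (η : Euc n), 0 ≤ b → b ≤ β →
      2 * b ≤ n - 1 → 2 * γ = 3 + 2 * β + 2 * b - n → 0 ≤ γ → α ≤ γ → 0 < a → 0 < r → a ≤ ‖η‖ →
      ‖(jap η ^ α : ℝ) • Sr r q η‖ₑ ^ 2 ≤
        C * ENNReal.ofReal ((4 * (1 + a⁻¹)) ^ γ * (1 + r) ^ (-γ)) ^ 2 *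
        sobolevEnergy volume (weightedFourier β q) *
        ∫⁻ θ in {θ : Metric.sphere (0 : Euc n) 1 | 0 ≤ ⟪η, (θ : Euc n)⟫},
          angularDensity (2 * b) (weightedFourier β q) (ewaldPoint r η θ) θ ∂volume.toSphere := by
  obtain ⟨C, hC⟩ := exists_sq_enorm_integral_ewaldM_ft_le hn
  refine ⟨C * 2 ^ n, fun α β b γ a r q η hb hbβ hbn hγ hγ_nonneg hαγ ha hr hη ↦ ?_⟩
  have hη_ne : η ≠ 0 := norm_pos_iff.1 (ha.trans_le hη)
  set w := jap η ^ α * (2 / (‖η‖ * (1 + r)))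
  set v := (4 * (1 + a⁻¹)) ^ γ * (1 + r) ^ (-γ)
  set k := (r * ‖η‖ / 2) ^ (n - 1) *
    ((‖η‖ * (1 + r) / 4) ^ (-β) * (r * ‖η‖ / 4) ^ (-b)) ^ 2
  set E := sobolevEnergy volume (weightedFourier β q)
  set J := ∫⁻ θ in {θ : Metric.sphere (0 : Euc n) 1 | 0 ≤ ⟪η, (θ : Euc n)⟫},
    angularDensity (2 * b) (weightedFourier β q) (ewaldPoint r η θ) θ ∂volume.toSphere
  have hw : 0 ≤ w := mul_nonneg (Real.rpow_nonneg (jap_pos η).le _) (by positivity)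
  have hweight : ENNReal.ofReal w ^ 2 * ENNReal.ofReal k ≤
      (2 ^ n : ℝ≥0) * ENNReal.ofReal v ^ 2 := by
    rw [← ENNReal.ofReal_pow hw, ← ENNReal.ofReal_pow (by positivity), ← ENNReal.ofReal_coe_nnreal,
      ← ENNReal.ofReal_mul (sq_nonneg _), ← ENNReal.ofReal_mul (by positivity)]
    exact ENNReal.ofReal_le_ofReal
      (jap_rpow_mul_ewald_weight_le (by omega) hbn hγ hγ_nonneg hαγ ha hr hη)
  rw [Sr, smul_smul, enorm_smul, Real.enorm_of_nonneg hw, mul_pow]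
  calc _ ≤ ENNReal.ofReal w ^ 2 * (C * ENNReal.ofReal k * E * J) :=
        mul_le_mul_right (hC b β q r η hb hbβ hr hη_ne) _
    _ = C * (ENNReal.ofReal w ^ 2 * ENNReal.ofReal k) * E * J := by ring
    _ ≤ C * ((2 ^ n : ℝ≥0) * ENNReal.ofReal v ^ 2) * E * J := by
        gcongr
    _ = _ := by
        push_cast
        ring

theorem sobolevEnergy_ne_top {V F : Type*} [NormedAddCommGroup V] [NormedSpace ℝ V]
    [FiniteDimensional ℝ V] [MeasurableSpace V] [BorelSpace V] [NormedAddCommGroup F]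
    [NormedSpace ℝ F] (μ : Measure V) [μ.HasTemperateGrowth] (g : 𝓢(V, F)) :
    sobolevEnergy μ g ≠ ∞ := by
  rw [sobolevEnergy, lintegral_add_left (g.continuous.enorm.measurable.pow_const 2),
    ← eLpNorm_two_sq, ← eLpNorm_two_sq]
  exact ENNReal.add_ne_top.2 ⟨ENNReal.pow_ne_top (g.memLp 2 μ).2.ne,
    ENNReal.pow_ne_top ((SchwartzMap.fderivCLM ℝ V F g).memLp 2 μ).2.ne⟩

theorem exists_eLpNorm_jap_smul_mul_Sr_le (hn : 2 ≤ n) {α β b γ a : ℝ} (hb : 0 ≤ b) (hbβ : b ≤ β)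
    (hbn : 2 * b < n - 1) (hγ : 2 * γ = 3 + 2 * β + 2 * b - n) (hγ_nonneg : 0 ≤ γ) (hαγ : α ≤ γ)
    (ha : 0 < a) :
    ∃ C : ℝ≥0, ∀ χ : Euc n → ℂ, (∀ η, ‖χ η‖ ≤ 1) → (∀ η, ‖η‖ < a → χ η = 0) →
      ∀ (q : 𝓢(Euc n, ℂ)) (r : ℝ), 0 < r →
        eLpNorm (fun η ↦ (jap η ^ α : ℝ) • (χ η * Sr r q η)) 2 volume ^ 2 ≤
          C * (ENNReal.ofReal ((1 + r) ^ (-γ)) * wSobNorm β 1 q ^ 2) ^ 2 := by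
  have : Nontrivial (Euc n) := nontrivial_euc (by omega)
  obtain ⟨C, hC⟩ := exists_sq_enorm_jap_smul_Sr_le hn
  obtain ⟨c, hc⟩ := exists_lintegral_angularDensity_ewaldPoint_le (F := ℂ)
    (volume : Measure (Euc n)) (s := 2 * b) (by positivity) (by simpa using hbn)
  set M := (4 * (1 + a⁻¹)) ^ γ
  refine ⟨C * M.toNNReal ^ 2 * c * (((2 * Real.pi) ^ n).toNNReal) ^ 2, fun χ hχ hχ0 q r hr ↦ ?_⟩
  set g := weightedFourier β q
  set D := ENNReal.ofReal (M * (1 + r) ^ (-γ))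
  set J : Euc n → ℝ≥0∞ := fun η ↦
    ∫⁻ θ in {θ : Metric.sphere (0 : Euc n) 1 | 0 ≤ ⟪η, (θ : Euc n)⟫},
      angularDensity (2 * b) g (ewaldPoint r η θ) θ ∂volume.toSphere
  have hpointwise (η : Euc n) : ‖(jap η ^ α : ℝ) • (χ η * Sr r q η)‖ₑ ^ 2 ≤
      C * D ^ 2 * sobolevEnergy volume g * J η := by
    rcases lt_or_ge ‖η‖ a with hη | hη
    · simp [hχ0 η hη]
    refine le_trans ?_ (hC α β b γ a r q η hb hbβ hbn.le hγ hγ_nonneg hαγ ha hr hη)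
    rw [← mul_smul_comm, enorm_mul]
    gcongr
    exact mul_le_of_le_one_left' (by simpa [← ofReal_norm] using hχ η)
  have henergy := sobolevEnergy_ne_top volume g
  calc eLpNorm (fun η ↦ (jap η ^ α : ℝ) • (χ η * Sr r q η)) 2 volume ^ 2
      ≤ ∫⁻ η, C * D ^ 2 * sobolevEnergy volume g * J η := by
        rw [eLpNorm_two_sq]
        exact lintegral_mono hpointwise
    _ ≤ C * D ^ 2 * sobolevEnergy volume g * (c * sobolevEnergy volume g) := by
        rw [lintegral_const_mul' _ _ (by finiteness)]
        gcongr
        refine (hc g r g.continuous hr.le).trans ?_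
        gcongr
        exact lintegral_mono fun x ↦ le_self_add
    _ = C * D ^ 2 * c * sobolevEnergy volume g ^ 2 := by ring
    _ ≤ C * D ^ 2 * c * (ENNReal.ofReal ((2 * Real.pi) ^ n) * wSobNorm β 1 q ^ 2) ^ 2 := by
        gcongr
        exact sobolevEnergy_weightedFourier_le β q
    _ = _ := by
        rw [show D = ENNReal.ofReal M * ENNReal.ofReal ((1 + r) ^ (-γ)) from
          ENNReal.ofReal_mul (by positivity)]
        push_cast [ENNReal.ofReal]
        ring

theorem exists_singular_exponent (hn : 2 ≤ n) {β α : ℝ} (hβ : 0 ≤ β)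
    (hrange : (((n : ℝ) - 3) / 2 < β ∧ β < ((n : ℝ) - 1) / 2 ∧
        α ≤ 2 * β - ((n : ℝ) - 3) / 2) ∨
      (((n : ℝ) - 1) / 2 ≤ β ∧ α < β + 1)) :
    ∃ b γ : ℝ, 0 ≤ b ∧ b ≤ β ∧ 2 * b < n - 1 ∧ 2 * γ = 3 + 2 * β + 2 * b - n ∧ 0 < γ ∧ α ≤ γ := by
  have hn' : (2 : ℝ) ≤ n := mod_cast hn
  rcases hrange with ⟨hβ_gt, hβ_lt, hα⟩ | ⟨hβ_ge, hα⟩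
  · exact ⟨β, 2 * β - (n - 3) / 2, hβ, le_rfl, by linarith, by ring, by linarith, hα⟩
  · obtain ⟨ε, hε, hε_le⟩ : ∃ ε : ℝ, 0 < ε ∧ ε ≤ min (((n : ℝ) - 1) / 2) (β + 1 - α) :=
      ⟨_, lt_min (by linarith) (by linarith), le_rfl⟩
    obtain ⟨hεn, hεα⟩ := le_min_iff.1 hε_le
    exact ⟨(n - 1) / 2 - ε, β + 1 - ε, by linarith, by linarith, by linarith, by ring,
      by linarith, by linarith⟩

end WeightedEstimate

theorem stmt4_general (n : ℕ) (hn : 2 ≤ n) (β α : ℝ) (hβ : 0 ≤ β)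
    (hrange : (((n : ℝ) - 3) / 2 < β ∧ β < ((n : ℝ) - 1) / 2 ∧
        α ≤ 2 * β - ((n : ℝ) - 3) / 2) ∨
      (((n : ℝ) - 1) / 2 ≤ β ∧ α < β + 1))
    (C₀ : ℝ) (hC₀ : 0 < C₀) :
    ∃ γ C : ℝ, 0 < γ ∧ 0 < C ∧
      ∀ χ : Euc n → ℂ, (∀ ξ, ‖χ ξ‖ ≤ 1) → (∀ ξ, ‖ξ‖ < C₀ → χ ξ = 0) →
        ∀ (q : SchwartzMap (Euc n) ℂ) (r : ℝ), 0 < r →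
          eLpNorm (fun η ↦ (jap η ^ α : ℝ) • (χ η * Sr r q η)) 2 volume
            ≤ ENNReal.ofReal (C * (1 + r) ^ (-γ)) * wSobNorm β 1 q ^ 2 := by
  obtain ⟨b, γ, hb, hbβ, hbn, hγ, hγ_pos, hαγ⟩ := exists_singular_exponent hn hβ hrange
  obtain ⟨K, hK⟩ := exists_eLpNorm_jap_smul_mul_Sr_le hn hb hbβ hbn hγ hγ_pos.le hαγ hC₀
  refine ⟨γ, K + 1, hγ_pos, by positivity, fun χ hχ hχ0 q r hr ↦ ?_⟩
  refine (ENNReal.pow_le_pow_left_iff two_ne_zero).1 ((hK χ hχ hχ0 q r hr).trans ?_)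
  have hsq : (K : ℝ≥0∞) ≤ ENNReal.ofReal (K + 1) ^ 2 := by
    rw [ENNReal.ofReal_add K.coe_nonneg zero_le_one, ENNReal.ofReal_coe_nnreal, ENNReal.ofReal_one]
    exact le_self_add.trans (le_self_pow₀ le_add_self two_ne_zero)
  rw [ENNReal.ofReal_mul (by positivity), mul_assoc, mul_pow _ (_ * _) 2]
  exact mul_le_mul_left hsq _

/-- weighted `L²` estimate for the spherical part `χ·S_r(q)` of the double
dispersion operator. -/
theorem stmt4 (n : ℕ) (hn : 2 ≤ n) (β α : ℝ) (hβ : 0 ≤ β)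
    (hrange : (((n : ℝ) - 3) / 2 < β ∧ β < ((n : ℝ) - 1) / 2 ∧
        α ≤ 2 * β - ((n : ℝ) - 3) / 2) ∨
      (((n : ℝ) - 1) / 2 ≤ β ∧ α < β + 1))
    (C₀ : ℝ) (hC₀ : 1 ≤ C₀) (χ : Euc n → ℝ) (hχsm : ContDiff ℝ (⊤ : ℕ∞) χ)
    (hχ01 : ∀ ξ, χ ξ ∈ Set.Icc (0 : ℝ) 1)
    (hχ1 : ∀ ξ : Euc n, 2 * C₀ < ‖ξ‖ → χ ξ = 1)
    (hχ0 : ∀ ξ : Euc n, ‖ξ‖ < C₀ → χ ξ = 0) :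
    ∃ γ C : ℝ, 0 < γ ∧ 0 < C ∧
      ∀ (q : SchwartzMap (Euc n) ℂ) (r : ℝ), 0 < r →
        eLpNorm (fun η : Euc n => (jap η ^ α : ℝ) • ((χ η : ℂ) * Sr r (⇑q) η)) 2 volume
          ≤ ENNReal.ofReal (C * (1 + r) ^ (-γ)) * (wSobNorm β 1 (⇑q)) ^ 2 := by
  obtain ⟨γ, C, hγ, hC, h⟩ := stmt4_general n hn β α hβ hrange C₀ (zero_lt_one.trans_le hC₀)
  exact ⟨γ, C, hγ, hC, h (fun ξ ↦ χ ξ)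
    (fun ξ ↦ by simpa [abs_of_nonneg (hχ01 ξ).1] using (hχ01 ξ).2)
    fun ξ hξ ↦ by simp [hχ0 ξ hξ]⟩
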